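/- arXiv:2203.10293 — 6 statements merged into one kernel-verified Lean document; each statement's English description precedes it below -/
import Mathlib

section
/- (Canonical Ramsey Theorem) For every natural number n ≥ 1 and every partition P of [ω]^n (P may be infinite), there exists an infinite set Y ⊆ ℕ that is canonical for P. -/
/-! Common definitions. -/

/-- The `i`-th smallest element of a finite set of naturals (default 0 if `i ≥ |s|`). -/
def nth (s : Finset ℕ) (i : ℕ) : ℕ := (s.sort (· ≤ ·)).getD i 0

/-- `[ω]^n` : the set of `n`-element subsets of `ℕ` (as `Finset`s). -/
def cube (n : ℕ) : Set (Finset ℕ) := {s | s.card = n}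

/-- `P` is a partition of `Z` (one member may be empty). -/
def IsPartitionOn (Z : Set (Finset ℕ)) (P : Set (Set (Finset ℕ))) : Prop :=
  ⋃₀ P = Z ∧ ∀ A ∈ P, ∀ B ∈ P, A ∩ B = ∅ ∨ A = B

/-- The equivalence relation `≈_P` induced by a partition `P`. -/
def EquivP (P : Set (Set (Finset ℕ))) (p q : Finset ℕ) : Prop := ∃ A ∈ P, p ∈ A ∧ q ∈ A

/-- `X` is `I`-canonical for a partition `P` of `[ω]^n`. -/
def ICanon (n : ℕ) (P : Set (Set (Finset ℕ))) (I : Set ℕ) (X : Set ℕ) : Prop :=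
  ∀ p q : Finset ℕ, ↑p ⊆ X → p.card = n → ↑q ⊆ X → q.card = n →
    (EquivP P p q ↔ ∀ i ∈ I, nth p i = nth q i)

/-- `X` is canonical for a partition `P` of `[ω]^n`. -/
def Canon (n : ℕ) (P : Set (Set (Finset ℕ))) (X : Set ℕ) : Prop :=
  ∃ I : Set ℕ, I ⊆ Set.Iio n ∧ ICanon n P I X

/-- `X` is homogeneous for a partition `P` of `[ω]^n`. -/
def Homog (n : ℕ) (P : Set (Set (Finset ℕ))) (X : Set ℕ) : Prop :=
  ∃ A ∈ P, ∀ s : Finset ℕ, ↑s ⊆ X → s.card = n → s ∈ A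

/-- `[2n]^n` : the `n`-element subsets of `{0, …, 2n-1}`. -/
def idx (n : ℕ) : Finset (Finset ℕ) := Finset.powersetCard n (Finset.range (2 * n))

/-- The set `Q_{pq} = { z ∈ [ω]^{2n} : {z_[i] : i ∈ p} ≈_P {z_[i] : i ∈ q} }`. -/
def Qpq (n : ℕ) (P : Set (Set (Finset ℕ))) (p q : Finset ℕ) : Set (Finset ℕ) :=
  {z | z.card = 2 * n ∧ EquivP P (p.image (nth z)) (q.image (nth z))}

/-- `P*` : the atoms of the field of subsets of `[ω]^{2n}` generated by the sets `Q_{pq}`. -/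
def Atoms (n : ℕ) (P : Set (Set (Finset ℕ))) : Set (Set (Finset ℕ)) :=
  {Q | Q.Nonempty ∧ ∃ S : Finset ℕ → Finset ℕ → Set (Finset ℕ),
    (∀ p ∈ idx n, ∀ q ∈ idx n, S p q = Qpq n P p q ∨ S p q = cube (2 * n) \ Qpq n P p q) ∧
    Q = ⋂ p ∈ idx n, ⋂ q ∈ idx n, S p q}

/-- `I_{pq} = { i < n : p_[i] = q_[i] }`. -/
def Ipq (n : ℕ) (p q : Finset ℕ) : Set ℕ := {i | i < n ∧ nth p i = nth q i}

/-- `I(Q) = ⋂ { I_{pq} : p, q ∈ [2n]^n, Q ⊆ Q_{pq} }`. -/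
def IofQ (n : ℕ) (P : Set (Set (Finset ℕ))) (Q : Set (Finset ℕ)) : Set ℕ :=
  ⋂ p ∈ idx n, ⋂ q ∈ idx n, ⋂ (_ : Q ⊆ Qpq n P p q), Ipq n p q

/-- `ρ(a,b) = |(a △ b) ∩ X|`, identifying `a` with `{0, …, a-1}`. -/
noncomputable def rho (X : Set ℕ) (a b : ℕ) : ℕ := (X ∩ Set.Ico (min a b) (max a b)).ncard

/-- The sparsity `d(x) = min { ρ(a,b) : a, b ∈ x ∪ {e}, a ≠ b }` (with `d(∅) = ⊤ = ω`). -/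
noncomputable def sparsity (X : Set ℕ) (e : ℕ) (x : Finset ℕ) : ℕ∞ :=
  ⨅ a ∈ (x ∪ {e} : Finset ℕ), ⨅ b ∈ (x ∪ {e} : Finset ℕ), ⨅ _ : a ≠ b, (rho X a b : ℕ∞)

/-- `r(x,y) = max_{b ∈ y} min { ρ(a,b) : a ∈ x ∪ {e}, a ≤ b }`. -/
noncomputable def rfun (X : Set ℕ) (e : ℕ) (x y : Finset ℕ) : ℕ :=
  y.sup fun b => sInf ((fun a => rho X a b) '' {a : ℕ | a ∈ (x ∪ {e} : Finset ℕ) ∧ a ≤ b})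

/-- `x →_{pq} y` : there is `z ∈ [X]^{2n}` with `{z_[i] : i ∈ p} = x` and `{z_[i] : i ∈ q} = y`. -/
def Arrow (X : Set ℕ) (n : ℕ) (p q x y : Finset ℕ) : Prop :=
  ∃ z : Finset ℕ, ↑z ⊆ X ∧ z.card = 2 * n ∧ p.image (nth z) = x ∧ q.image (nth z) = y

/-- `x ↔_Q y` : `x →_{pq} y` for some `p, q ∈ [2n]^n` with `Q ⊆ Q_{pq}`. -/
def RelQ (n : ℕ) (P : Set (Set (Finset ℕ))) (Q : Set (Finset ℕ)) (X : Set ℕ)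
    (x y : Finset ℕ) : Prop :=
  ∃ p ∈ idx n, ∃ q ∈ idx n, Q ⊆ Qpq n P p q ∧ Arrow X n p q x y

/-- `x_0, …, x_l` is a `t`-cascade. -/
def IsCascade (n : ℕ) (P : Set (Set (Finset ℕ))) (Q : Set (Finset ℕ)) (X : Set ℕ) (e : ℕ)
    (t l : ℕ) (x : ℕ → Finset ℕ) : Prop :=
  (∀ i ≤ l, ↑(x i) ⊆ X \ {e} ∧ (x i).card = n) ∧
  ∀ i < l, ((n ^ (t - 2 * i) : ℕ) : ℕ∞) ≤ sparsity X e (x i) ∧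
    rfun X e (x i) (x (i + 1)) ≤ n ^ (t - 2 * i - 1) ∧
    RelQ n P Q X (x i) (x (i + 1))

/-- The `n`-fold Fubini power `u ⊗ ⋯ ⊗ u` of an ultrafilter on `ℕ`, as an
ultrafilter on `Fin n → ℕ`. -/
noncomputable def tensorPow (u : Ultrafilter ℕ) : (n : ℕ) → Ultrafilter (Fin n → ℕ)
  | 0 => pure (fun i => i.elim0)
  | n + 1 => u.bind fun a => (tensorPow u n).map (Fin.cons a)

/-- The diagonal ultrafilter extension `f̃(u, u, …, u)` of `f : ℕ^n → ℕ`. -/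
noncomputable def diagExt {n : ℕ} (f : (Fin n → ℕ) → ℕ) (u : Ultrafilter ℕ) : Ultrafilter ℕ :=
  (tensorPow u n).map f

/-- The Rudin–Keisler preorder. -/
def RKle (u v : Ultrafilter ℕ) : Prop := ∃ h : ℕ → ℕ, v.map h = u

/-- Rudin–Keisler equivalence. -/
def RKeq (u v : Ultrafilter ℕ) : Prop := RKle u v ∧ RKle v u

/-- `u` is nonprincipal: it contains no finite set. -/
def Nonprincipal (u : Ultrafilter ℕ) : Prop := ∀ S : Set ℕ, S.Finite → S ∉ u

/-- `u` is a Ramsey ultrafilter. -/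
def IsRamseyU (u : Ultrafilter ℕ) : Prop :=
  Nonprincipal u ∧ ∀ n : ℕ, 1 ≤ n → ∀ P : Set (Set (Finset ℕ)),
    IsPartitionOn (cube n) P → P.Finite → ∃ X ∈ u, Homog n P X

/-- `f : ℕ^n → ℕ` is selectively upward injective on `X` w.r.t. the index set `I`
(`I = ∅` gives "upward constant"). -/
def SelUpInjWrt (n : ℕ) (f : (Fin n → ℕ) → ℕ) (X : Set ℕ) (I : Set (Fin n)) : Prop :=
  ∀ x y : Fin n → ℕ, (∀ i, x i ∈ X) → (∀ i, y i ∈ X) → StrictMono x → StrictMono y →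
    (f x = f y ↔ ∀ i ∈ I, x i = y i)

/-!
Let `f` send an increasing `n`-tuple to the class of its set of entries. Colour a `2n`-element set
by the pairs of `n`-tuples of its elements on which `f` agrees. By Ramsey's theorem there is an
infinite set on which this colour is constant, so that for tuples in it whether `f p = f q` depends
only on the relative order of the entries of `p` and `q`. Call a coordinate inessential if changing
it alone does not change `f`; the essential coordinates form the index set of the theorem.

Increasing tuples `p`, `q` with the same essential entries have the same value as `max p q`, because
the inessential entries can be raised one at a time. For the converse, let `f p = f q`. If `p i` is
not an entry of `q`, it can be moved a little without changing its order relative to `q`, so `i` is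
inessential. If `i` is essential and `p i < q i`, then `p i = q j` for some `j < i`, and `j` is
inessential by induction on `i`; moving `q j` away from `p i` leads back to the first case.
-/

open scoped Finset

section HomogeneousSets

variable {α κ : Type*}

lemma exists_infinite_forall_finset {p : Finset α → Prop} (hanti : Antitone p) (hempty : p ∅)
    (hext : ∀ s, p s → ∃ t, s ⊂ t ∧ p t) :
    ∃ Y : Set α, Y.Infinite ∧ ∀ t : Finset α, ↑t ⊆ Y → p t := by
  have : Nonempty {s // p s} := ⟨∅, hempty⟩
  have : NoMaxOrder {s // p s} := ⟨fun ⟨s, hs⟩ => by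
    obtain ⟨t, hst, ht⟩ := hext s hs
    exact ⟨⟨t, ht⟩, hst⟩⟩
  obtain ⟨S, hS⟩ := Nat.exists_strictMono {s // p s}
  have hdir : Directed (· ⊆ ·) fun i => ((S i : Finset α) : Set α) :=
    Monotone.directed_le fun i j hij => Finset.coe_subset.2 (hS.monotone hij)
  refine ⟨⋃ i, (S i : Finset α), Set.infinite_iUnion ?_, fun t ht => ?_⟩
  · exact Finset.coe_injective.comp (Subtype.val_injective.comp hS.injective)
  · obtain ⟨i, hi⟩ := hdir.exists_mem_subset_of_finset_subset_biUnion ht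
    exact hanti (Finset.coe_subset.1 hi) (S i).2

variable [Finite κ]

lemma exists_eventually_eq_const (u : Ultrafilter α) (f : α → κ) : ∃ k, ∀ᶠ x in u, f x = k :=
  Ultrafilter.eventually_exists_iff.1 (.of_forall fun x => ⟨f x, rfl⟩)

section Prehomogeneous

variable [DecidableEq α]

/-- The limit along an ultrafilter `u` of the colour of `insert x s` as `x` varies: from a colouring
of `(m + 1)`-element sets it makes one of `m`-element sets. -/
noncomputable def limitColoring (u : Ultrafilter α) (c : Finset α → κ)
    (s : Finset α) : κ :=
  (exists_eventually_eq_const u fun x => c (insert x s)).choose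

lemma eventually_eq_limitColoring (u : Ultrafilter α) (c : Finset α → κ)
    (s : Finset α) : ∀ᶠ x in u, c (insert x s) = limitColoring u c s :=
  (exists_eventually_eq_const u fun x => c (insert x s)).choose_spec

/-- `s` is *prehomogeneous* for the colouring `c` of `m`-element sets if every subset of `s` with at
most `m` elements has the same iterated limit colour as `∅`. -/
def IsPrehomogeneous (u : Ultrafilter α) (c : Finset α → κ) (m : ℕ)
    (s : Finset α) : Prop :=
  ∀ t ⊆ s, ∀ j, j + #t = m → (limitColoring u)^[j] c t = (limitColoring u)^[m] c ∅

lemma isPrehomogeneous_empty (u : Ultrafilter α) (c : Finset α → κ) (m : ℕ) :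
    IsPrehomogeneous u c m ∅ := by
  intro t ht j hj
  obtain rfl := Finset.subset_empty.1 ht
  rw [← hj, Finset.card_empty, Nat.add_zero]

lemma IsPrehomogeneous.eventually_insert {u : Ultrafilter α} {c : Finset α → κ}
    {m : ℕ} {s : Finset α} (hs : IsPrehomogeneous u c m s) :
    ∀ᶠ x in u, IsPrehomogeneous u c m (insert x s) := by
  have hlim : ∀ᶠ x in u, ∀ t ∈ s.powerset, ∀ j ∈ Finset.range m,
      (limitColoring u)^[j] c (insert x t) = (limitColoring u)^[j + 1] c t := by
    simp only [Filter.eventually_all_finset, Function.iterate_succ_apply']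
    exact fun t _ j _ => eventually_eq_limitColoring u _ t
  filter_upwards [hlim] with x hx t ht j hj
  rw [Finset.subset_insert_iff] at ht
  by_cases hxt : x ∈ t
  · have hcard := Finset.card_erase_add_one hxt
    have hxj := hx (t.erase x) (Finset.mem_powerset.2 ht) j (Finset.mem_range.2 (by lia))
    rw [Finset.insert_erase hxt] at hxj
    exact hxj.trans (hs _ ht _ (by lia))
  · exact hs t (by rwa [Finset.erase_eq_of_notMem hxt] at ht) j hj

end Prehomogeneous

theorem exists_infinite_homogeneous [Infinite α] (c : Finset α → κ) (m : ℕ) :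
    ∃ Y : Set α, Y.Infinite ∧ ∃ k, ∀ t : Finset α, ↑t ⊆ Y → #t = m → c t = k := by
  classical
  let u := Filter.hyperfilter α
  obtain ⟨Y, hY, hYpre⟩ := exists_infinite_forall_finset (p := IsPrehomogeneous u c m)
    (fun s t hst ht r hr => ht r (hr.trans hst)) (isPrehomogeneous_empty u c m) fun s hs => by
      obtain ⟨x, hx, hxs⟩ := (hs.eventually_insert.and
        (Filter.hyperfilter_le_cofinite s.eventually_cofinite_notMem)).exists
      exact ⟨insert x s, Finset.ssubset_insert hxs, hx⟩
  exact ⟨Y, hY, (limitColoring u)^[m] c ∅, fun t ht hcard =>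
    hYpre t ht t subset_rfl 0 (by rw [hcard, Nat.zero_add])⟩

end HomogeneousSets

lemma nth_image_univ {m : ℕ} {z : Fin m → ℕ} (hz : StrictMono z) (i : Fin m) :
    nth (Finset.univ.image z) i = z i := by
  have hcard : #(Finset.univ.image z) = m := by
    rw [Finset.card_image_of_injective _ hz.injective, Finset.card_fin]
  have hlen : (i : ℕ) < ((Finset.univ.image z).sort (· ≤ ·)).length := by
    rw [Finset.length_sort, hcard]; exact i.2
  have hz_eq : z = (Finset.univ.image z).orderEmbOfFin hcard :=
    Finset.orderEmbOfFin_unique hcard (fun j => Finset.mem_image_of_mem z (Finset.mem_univ j)) hz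
  rw [nth, List.getD_eq_getElem _ _ hlen, congrFun hz_eq i, Finset.orderEmbOfFin_apply]
  rfl

lemma exists_strictMono_range_subset {ι α : Type*} [Fintype ι] [LinearOrder α] [Infinite α]
    (f : ι → α) :
    ∃ z : Fin (Fintype.card ι) → α, StrictMono z ∧ Set.range f ⊆ Set.range z := by
  obtain ⟨T, hT, hcard⟩ := Infinite.exists_superset_card_eq (Finset.univ.image f) (Fintype.card ι)
    Finset.card_image_le
  refine ⟨T.orderEmbOfFin hcard, (T.orderEmbOfFin hcard).strictMono, ?_⟩
  rw [Finset.range_orderEmbOfFin, ← Set.image_univ, ← Finset.coe_univ, ← Finset.coe_image]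
  exact Finset.coe_subset.2 hT

lemma exists_strictMono_extension {m : ℕ} {z : Fin m → ℕ} (hz : StrictMono z) :
    ∃ φ : ℕ → ℕ, StrictMono φ ∧ ∀ i : Fin m, φ i = z i := by
  refine ⟨fun k => if h : k < m then z ⟨k, h⟩ else k + ∑ i, z i,
    strictMono_nat_of_lt_succ fun k => ?_, fun i => dif_pos i.2⟩
  have hle (i : Fin m) : z i ≤ ∑ i, z i :=
    Finset.single_le_sum_of_canonicallyOrdered (Finset.mem_univ i)
  split_ifs with hk hk' hk'
  · exact hz (Fin.mk_lt_mk.2 k.lt_succ_self)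
  · have := hle ⟨k, hk⟩
    lia
  all_goals lia

theorem exists_strictMono_forall_comp_eq {κ : Type*} [Finite κ] {m : ℕ} (c : (Fin m → ℕ) → κ) :
    ∃ h : ℕ → ℕ, StrictMono h ∧ ∃ k, ∀ z, StrictMono z → c (h ∘ z) = k := by
  obtain ⟨Y, hY, k, hk⟩ := exists_infinite_homogeneous (fun s => c fun i => nth s i) m
  have hh : StrictMono (Nat.nth (· ∈ Y)) := Nat.nth_strictMono hY
  refine ⟨_, hh, k, fun z hz => ?_⟩
  have hhz := hh.comp hz
  rw [← hk (Finset.univ.image (Nat.nth (· ∈ Y) ∘ z))]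
  · simp only [nth_image_univ hhz]
  · rw [Finset.coe_image, Finset.coe_univ, Set.image_univ]
    exact Set.range_subset_iff.2 fun i => Nat.nth_mem_of_infinite hY (z i)
  · rw [Finset.card_image_of_injective _ hhz.injective, Finset.card_fin]

lemma exists_strictMono_comp_succAbove {α : Type*} [LinearOrder α] {n : ℕ} {p q : Fin n → α}
    {i : Fin n} (hp : StrictMono p) (hq : StrictMono q) (hne : ∀ j, j ≠ i → p j = q j)
    (hlt : p i < q i) :
    ∃ z : Fin (n + 1) → α, StrictMono z ∧
      z ∘ i.succ.succAbove = p ∧ z ∘ i.castSucc.succAbove = q := by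
  let z : Fin (n + 1) → α := i.castSucc.insertNth (p i) q
  have hz_self : z i.castSucc = p i := Fin.insertNth_apply_same ..
  have hz_succAbove (j : Fin n) : z (i.castSucc.succAbove j) = q j :=
    Fin.insertNth_apply_succAbove ..
  refine ⟨z, ?_, funext fun j => ?_, funext hz_succAbove⟩
  · refine (Fin.strictMono_insertNth_iff ..).2 ⟨hq, fun j hj => ?_, fun j hj => ?_⟩
    · have hji : j < i := Fin.castSucc_lt_castSucc_iff.1 hj
      exact hne j hji.ne ▸ hp hji
    · exact hlt.trans_le (hq.monotone (Fin.castSucc_le_castSucc_iff.1 hj))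
  · obtain rfl | hj := eq_or_ne j i
    · rw [Function.comp_apply, Fin.succAbove_succ_self, hz_self]
    · have hsame : i.succ.succAbove j = i.castSucc.succAbove j := by
        rcases hj.lt_or_gt with hj | hj
        · rw [Fin.succAbove_succ_of_le _ _ hj.le, Fin.succAbove_castSucc_of_lt _ _ hj]
        · rw [Fin.succAbove_succ_of_lt _ _ hj, Fin.succAbove_castSucc_of_le _ _ hj.le]
      rw [Function.comp_apply, hsame, hz_succAbove, hne j hj]

section OrderInvariance

variable {κ : Type*}

/-- The kernel of `f` is invariant under strictly increasing substitutions: whether `f p = f q`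
depends only on the relative order of the entries of `p` and `q`. -/
def OrderInvariantKernel {ι : Type*} (f : (ι → ℕ) → κ) : Prop :=
  ∀ φ : ℕ → ℕ, StrictMono φ → ∀ p q, f (φ ∘ p) = f (φ ∘ q) ↔ f p = f q

theorem exists_strictMono_orderInvariantKernel {ι : Type*} [Finite ι] (f : (ι → ℕ) → κ) :
    ∃ h : ℕ → ℕ, StrictMono h ∧ OrderInvariantKernel fun p => f (h ∘ p) := by
  have := Fintype.ofFinite ι
  let pattern (z : Fin (Fintype.card (ι ⊕ ι)) → ℕ) : Set (ι ⊕ ι → Fin (Fintype.card (ι ⊕ ι))) :=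
    {a | f (z ∘ a ∘ Sum.inl) = f (z ∘ a ∘ Sum.inr)}
  obtain ⟨h, hh, k, hk⟩ := exists_strictMono_forall_comp_eq pattern
  refine ⟨h, hh, fun φ hφ p q => ?_⟩
  obtain ⟨z, hz, hrange⟩ := exists_strictMono_range_subset (Sum.elim p q)
  obtain ⟨a, ha⟩ := Set.range_subset_range_iff_exists_comp.1 hrange
  obtain rfl : z ∘ a ∘ Sum.inl = p := by rw [← Function.comp_assoc, ← ha, Sum.elim_comp_inl]
  obtain rfl : z ∘ a ∘ Sum.inr = q := by rw [← Function.comp_assoc, ← ha, Sum.elim_comp_inr]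
  exact Set.ext_iff.1 ((hk _ (hφ.comp hz)).trans (hk z hz).symm) a

/-- Coordinate `i` is inessential for `f` if changing it alone never changes the value of `f` on
increasing tuples. -/
def IsInessential {n : ℕ} (f : (Fin n → ℕ) → κ) (i : Fin n) : Prop :=
  ∀ p q, StrictMono p → StrictMono q → (∀ j, j ≠ i → p j = q j) → f p = f q

/-- The perturbation of `x ↦ 2 * x` that moves only the image of `a`, up to the gap next to it. -/
def bump (a : ℕ) : ℕ → ℕ := Function.update (2 * ·) a (2 * a + 1)

lemma bump_self (a : ℕ) : bump a a = 2 * a + 1 := Function.update_self ..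

lemma bump_of_ne {a x : ℕ} (h : x ≠ a) : bump a x = 2 * x := Function.update_of_ne h ..

lemma bump_ne_two_mul (a x : ℕ) : bump a x ≠ 2 * a := by
  by_cases h : x = a
  · rw [h, bump_self]; lia
  · rw [bump_of_ne h]; lia

lemma strictMono_bump (a : ℕ) : StrictMono (bump a) := by
  intro x y hxy
  simp only [bump, Function.update_apply]
  split_ifs <;> lia

lemma strictMono_two_mul : StrictMono fun x : ℕ => 2 * x := fun x y h => by
  change 2 * x < 2 * y
  lia

variable {n : ℕ} {f : (Fin n → ℕ) → κ} {p q : Fin n → ℕ} {i : Fin n}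

namespace OrderInvariantKernel

lemma apply_comp_eq_iff {ι : Type*} {f : (ι → ℕ) → κ} (hf : OrderInvariantKernel f) {m : ℕ}
    {z w : Fin m → ℕ} (hz : StrictMono z) (hw : StrictMono w) (a b : ι → Fin m) :
    f (z ∘ a) = f (z ∘ b) ↔ f (w ∘ a) = f (w ∘ b) := by
  obtain ⟨φ, hφ, hφz⟩ := exists_strictMono_extension hz
  obtain ⟨ψ, hψ, hψw⟩ := exists_strictMono_extension hw
  rw [← funext hφz, ← funext hψw]
  exact (hf φ hφ (Fin.val ∘ a) (Fin.val ∘ b)).trans (hf ψ hψ (Fin.val ∘ a) (Fin.val ∘ b)).symm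

lemma isInessential_of_lt (hf : OrderInvariantKernel f) (hp : StrictMono p) (hq : StrictMono q)
    (hne : ∀ j, j ≠ i → p j = q j) (hlt : p i < q i) (heq : f p = f q) : IsInessential f i := by
  intro p' q' hp' hq' hne'
  wlog hle' : p' i ≤ q' i generalizing p' q'
  · exact (this q' p' hq' hp' (fun j hj => (hne' j hj).symm) (le_of_not_ge hle')).symm
  rcases hle'.eq_or_lt with heq' | hlt'
  · congr 1
    funext j
    by_cases hj : j = i
    · rwa [hj]
    · exact hne' j hj
  · obtain ⟨z, hz, rfl, rfl⟩ := exists_strictMono_comp_succAbove hp hq hne hlt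
    obtain ⟨w, hw, rfl, rfl⟩ := exists_strictMono_comp_succAbove hp' hq' hne' hlt'
    exact (hf.apply_comp_eq_iff hz hw _ _).1 heq

lemma isInessential_of_notMem_range (hf : OrderInvariantKernel f) (hp : StrictMono p)
    (heq : f p = f q) (hi : p i ∉ Set.range q) : IsInessential f i := by
  have hbump : bump (p i) ∘ q = (2 * ·) ∘ q := Function.update_comp_eq_of_notMem_range _ _ hi
  refine hf.isInessential_of_lt (strictMono_two_mul.comp hp) ((strictMono_bump (p i)).comp hp)
    (fun j hj => (bump_of_ne (hp.injective.ne hj)).symm) ?_ ?_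
  · simp only [Function.comp_apply, bump_self, Nat.lt_succ_self]
  · rw [(hf _ strictMono_two_mul p q).2 heq, (hf _ (strictMono_bump (p i)) p q).2 heq, hbump]

lemma le_of_not_isInessential (hf : OrderInvariantKernel f) (hp : StrictMono p)
    (hq : StrictMono q) (heq : f p = f q) (hi : ¬IsInessential f i)
    (hagree : ∀ j < i, ¬IsInessential f j → p j = q j) : q i ≤ p i := by
  by_contra! hlt
  obtain ⟨j, hj⟩ : p i ∈ Set.range q := by
    by_contra hrange
    exact hi (hf.isInessential_of_notMem_range hp heq hrange)
  have hji : j < i := hq.lt_iff_lt.1 (hj ▸ hlt)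
  have hj_inessential : IsInessential f j := by
    by_contra hj'
    exact (hp hji).ne ((hagree j hji hj').trans hj)
  have heq_bump : f ((2 * ·) ∘ p) = f (bump (q j) ∘ q) :=
    ((hf _ strictMono_two_mul p q).2 heq).trans <|
      hj_inessential _ _ (strictMono_two_mul.comp hq) ((strictMono_bump _).comp hq)
        fun k hk => (bump_of_ne (hq.injective.ne hk)).symm
  refine hi (hf.isInessential_of_notMem_range (strictMono_two_mul.comp hp) heq_bump ?_)
  rintro ⟨k, hk⟩
  exact bump_ne_two_mul (q j) (q k) (hk.trans (congrArg (2 * ·) hj.symm))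

lemma eq_of_not_isInessential (hf : OrderInvariantKernel f) (hp : StrictMono p)
    (hq : StrictMono q) (heq : f p = f q) (hi : ¬IsInessential f i) : p i = q i := by
  induction i using WellFoundedLT.induction with
  | ind i ih =>
    exact le_antisymm
      (hf.le_of_not_isInessential hq hp heq.symm hi fun j hj hj' => (ih j hj hj').symm)
      (hf.le_of_not_isInessential hp hq heq hi ih)

end OrderInvariantKernel

lemma apply_eq_of_le_of_essential_eq (hp : StrictMono p) (hq : StrictMono q) (hle : p ≤ q)
    (hagree : ∀ i, ¬IsInessential f i → p i = q i) : f p = f q := by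
  let hybrid (m : ℕ) (j : Fin n) : ℕ := if (j : ℕ) < m then p j else q j
  have hybrid_strictMono (m : ℕ) : StrictMono (hybrid m) :=
    hp.ite' hq (fun j k hjk hk => lt_trans hjk hk) fun j k _ _ hjk => (hle j).trans_lt (hq hjk)
  have hybrid_succ (m : ℕ) : f (hybrid (m + 1)) = f (hybrid m) := by
    have hne (j : Fin n) (hj : (j : ℕ) ≠ m) : hybrid (m + 1) j = hybrid m j := by
      simp only [hybrid, Nat.lt_succ_iff_lt_or_eq, hj, or_false]
    by_cases hm : ∃ i : Fin n, (i : ℕ) = m ∧ IsInessential f i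
    · obtain ⟨i, rfl, hi⟩ := hm
      exact hi _ _ (hybrid_strictMono _) (hybrid_strictMono _) fun j hj =>
        hne j (Fin.val_ne_of_ne hj)
    · congr 1
      funext j
      by_cases hj : (j : ℕ) = m
      · have := hagree j fun hj' => hm ⟨j, hj, hj'⟩
        simp [hybrid, this]
      · exact hne j hj
  have hybrid_eq (m : ℕ) : f (hybrid m) = f q := by
    induction m with
    | zero => simp [hybrid]
    | succ m ih => exact (hybrid_succ m).trans ih
  simpa [hybrid] using hybrid_eq n

theorem OrderInvariantKernel.apply_eq_iff (hf : OrderInvariantKernel f) (hp : StrictMono p)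
    (hq : StrictMono q) : f p = f q ↔ ∀ i, ¬IsInessential f i → p i = q i := by
  refine ⟨fun heq i hi => hf.eq_of_not_isInessential hp hq heq hi, fun hagree => ?_⟩
  have hmax : StrictMono (p ⊔ q) := fun i j hij => max_lt_max (hp hij) (hq hij)
  have hpmax := apply_eq_of_le_of_essential_eq (f := f) hp hmax le_sup_left fun i hi => by
    simp [hagree i hi]
  have hqmax := apply_eq_of_le_of_essential_eq (f := f) hq hmax le_sup_right fun i hi => by
    simp [hagree i hi]
  exact hpmax.trans hqmax.symm

end OrderInvariance

theorem exists_strictMono_canonical {κ : Type*} {n : ℕ} (f : (Fin n → ℕ) → κ) :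
    ∃ h : ℕ → ℕ, StrictMono h ∧ ∃ I : Set (Fin n), ∀ p q, StrictMono p → StrictMono q →
      (f (h ∘ p) = f (h ∘ q) ↔ ∀ i ∈ I, p i = q i) := by
  obtain ⟨h, hh, hinv⟩ := exists_strictMono_orderInvariantKernel f
  exact ⟨h, hh, {i | ¬IsInessential (fun p => f (h ∘ p)) i}, fun p q => hinv.apply_eq_iff⟩

lemma IsPartitionOn.equivP_iff {Z : Set (Finset ℕ)} {P : Set (Set (Finset ℕ))}
    (hP : IsPartitionOn Z P) {s t : Finset ℕ} (hs : s ∈ Z) :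
    EquivP P s t ↔ {A ∈ P | s ∈ A} = {A ∈ P | t ∈ A} := by
  have hunique {A B : Set (Finset ℕ)} (hA : A ∈ P) (hB : B ∈ P) {r : Finset ℕ}
      (hrA : r ∈ A) (hrB : r ∈ B) : A = B :=
    (hP.2 A hA B hB).resolve_left (Set.Nonempty.ne_empty ⟨r, hrA, hrB⟩)
  constructor
  · rintro ⟨A, hA, hsA, htA⟩
    ext B
    refine and_congr_right fun hB => ⟨fun hsB => ?_, fun htB => ?_⟩
    · exact hunique hA hB hsA hsB ▸ htA
    · exact hunique hA hB htA htB ▸ hsA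
  · intro heq
    obtain ⟨A, hA, hsA⟩ : s ∈ ⋃₀ P := hP.1 ▸ hs
    exact ⟨A, hA, hsA, (heq.subset ⟨hA, hsA⟩).2⟩

lemma exists_strictMono_image_comp_eq {n : ℕ} {h : ℕ → ℕ} (hh : StrictMono h) {s : Finset ℕ}
    (hs : ↑s ⊆ Set.range h) (hcard : #s = n) :
    ∃ z : Fin n → ℕ, StrictMono z ∧ Finset.univ.image (h ∘ z) = s := by
  obtain ⟨z, hz⟩ := Set.range_subset_range_iff_exists_comp.1
    ((Finset.range_orderEmbOfFin s hcard).trans_subset hs)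
  refine ⟨z, fun i j hij => hh.lt_iff_lt.1 ?_, ?_⟩
  · exact (congrFun hz i ▸ congrFun hz j ▸ (s.orderEmbOfFin hcard).strictMono hij :)
  · rw [← hz, Finset.image_orderEmbOfFin_univ]

/-- Canonical Ramsey Theorem: for every `n ≥ 1` and every partition `P` of
`[ω]^n`, there is an infinite `Y ⊆ ℕ` canonical for `P`. -/
theorem stmt_1 (n : ℕ) (hn : 1 ≤ n) (P : Set (Set (Finset ℕ)))
    (hP : IsPartitionOn (cube n) P) :
    ∃ Y : Set ℕ, Y.Infinite ∧ Canon n P Y := by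
  obtain ⟨h, hh, I, hI⟩ := exists_strictMono_canonical
    fun p : Fin n → ℕ => {A ∈ P | Finset.univ.image p ∈ A}
  refine ⟨Set.range h, Set.infinite_range_of_injective hh.injective, Fin.val '' I,
    Set.image_subset_iff.2 fun i _ => i.2, fun s t hs hsn ht htn => ?_⟩
  obtain ⟨p, hp, rfl⟩ := exists_strictMono_image_comp_eq hh hs hsn
  obtain ⟨q, hq, rfl⟩ := exists_strictMono_image_comp_eq hh ht htn
  rw [hP.equivP_iff hsn, hI p q hp hq, Set.forall_mem_image]
  simp only [nth_image_univ (hh.comp hp), nth_image_univ (hh.comp hq), Function.comp_apply,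
    hh.injective.eq_iff]
end

section
/- Let n ≥ 2, let m = n^{n·B·(B−1)} where B = binomial(2n,n), let P be a partition of [ω]^n, let Q ∈ P*, and let X ⊆ ℕ be an infinite set with [X]^{2n} ⊆ Q. Then for all x, y ∈ [X⁻]^n with min(d(x), d(y)) ≥ m: x ≈_P y if and only if x_[i] = y_[i] for all i ∈ I(Q). -/
/-!
Index the `n`-subsets of `X` by the order embeddings `Fin n ↪o ℕ`. Since all `2n`-subsets of `X`
lie in one atom of `P*`, the relation `≈_P` becomes an equivalence relation `r` that neither
creates nor destroys equivalences when both arguments are pushed along an order embedding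
`ℕ ↪o ℕ`. Call a coordinate free when changing it alone never leaves the class. By invariance, one
equivalent pair differing only at `i` already makes `i` free. Given `r a b`, double all values and
then shift those arising from `a i` by one: if no non-free coordinate of `b` has the value `a i`,
this does not change the class of `b`, hence not that of `a`, so `i` is free. The non-free
coordinates of `a` and `b` therefore have the same set of values, i.e. `a` and `b` agree on them.
Conversely, tuples agreeing there are equivalent: change the free coordinates one at a time.
Finally `I(Q)` is the set of non-free coordinates, because `[2n]^n` contains, for each `i < n`,
two sets that differ in the `i`-th element only.
-/

section FreeCoordinates

variable {α : Type*} {n : ℕ}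

/-- The coordinate `i` is free for `r`, an equivalence relation on `n`-subsets written as increasing
`n`-tuples: changing only the `i`-th smallest element never leaves the equivalence class. -/
def IsFreeCoord [Preorder α] (r : Setoid (Fin n ↪o α)) (i : Fin n) : Prop :=
  ∀ ⦃a b : Fin n ↪o α⦄, (∀ j ≠ i, a j = b j) → r a b

/-- `r` is preserved and reflected by the order embeddings of `α` into itself. -/
def OrderInvariant [Preorder α] (r : Setoid (Fin n ↪o α)) : Prop :=
  ∀ (f : α ↪o α) (a b : Fin n ↪o α), r (a.trans f) (b.trans f) ↔ r a b

lemma rel_of_le_of_eq_on_not_isFreeCoord [Preorder α] {r : Setoid (Fin n ↪o α)}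
    {a b : Fin n ↪o α} (hle : ∀ i, a i ≤ b i)
    (hab : ∀ i, ¬ IsFreeCoord r i → a i = b i) : r a b := by
  -- `c k` takes its first `k` coordinates from `a`; it is increasing because `a ≤ b`.
  let c (k : ℕ) : Fin n ↪o α := OrderEmbedding.ofStrictMono
    (fun j ↦ if (j : ℕ) < k then a j else b j) fun i j hij ↦ by
      dsimp only
      split_ifs with hi hj hj
      · exact a.strictMono hij
      · exact (hle i).trans_lt (b.strictMono hij)
      · exact absurd ((Fin.lt_def.1 hij).trans hj) hi
      · exact b.strictMono hij
  have c_apply (k : ℕ) (j : Fin n) : c k j = if (j : ℕ) < k then a j else b j := rfl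
  have c_zero : c 0 = b := by ext j; simp [c_apply]
  have c_last : c n = a := by ext j; simp [c_apply]
  have c_succ (i : Fin n) : r (c (i + 1)) (c i) := by
    have off_i (j : Fin n) (hj : j ≠ i) : c (i + 1) j = c i j := by
      have : (j : ℕ) ≠ i := Fin.val_ne_of_ne hj
      simp only [c_apply, show (j : ℕ) < i + 1 ↔ (j : ℕ) < i by omega]
    by_cases hi : IsFreeCoord r i
    · exact hi off_i
    · have : c (i + 1) = c i := by
        ext j
        obtain rfl | hj := eq_or_ne j i
        · simp [c_apply, hab j hi]
        · exact off_i j hj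
      rw [this]
  have rel_b (k : ℕ) (hk : k ≤ n) : r (c k) b := by
    induction k with
    | zero => rw [c_zero]
    | succ k ih => exact r.trans (c_succ ⟨k, hk⟩) (ih (by omega))
  exact c_last ▸ rel_b n le_rfl

lemma rel_of_eq_on_not_isFreeCoord [LinearOrder α] {r : Setoid (Fin n ↪o α)}
    {a b : Fin n ↪o α} (hab : ∀ i, ¬ IsFreeCoord r i → a i = b i) : r a b := by
  let c : Fin n ↪o α := OrderEmbedding.ofStrictMono (fun i ↦ max (a i) (b i))
    fun i j hij ↦ max_lt_max (a.strictMono hij) (b.strictMono hij)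
  have c_apply (i : Fin n) : c i = max (a i) (b i) := rfl
  have hac : r a c := rel_of_le_of_eq_on_not_isFreeCoord (fun i ↦ le_max_left _ _)
    fun i hi ↦ by simp [c_apply, hab i hi]
  have hbc : r b c := rel_of_le_of_eq_on_not_isFreeCoord (fun i ↦ le_max_right _ _)
    fun i hi ↦ by simp [c_apply, hab i hi]
  exact r.trans hac (r.symm hbc)

end FreeCoordinates

section Canonicity

variable {n : ℕ} {r : Setoid (Fin n ↪o ℕ)} {a b : Fin n ↪o ℕ}

lemma exists_orderEmbedding_apply_eq {ι : Type*} [Finite ι] {u v : ι → ℕ}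
    (huv : ∀ i j, u i ≤ u j ↔ v i ≤ v j) : ∃ f g : ℕ ↪o ℕ, ∀ i, f (u i) = g (v i) := by
  have := Fintype.ofFinite ι
  -- `stretch s t` adds to the identity a step function sending `s i` to `t i`.
  let stretch (s t : ι → ℕ) : ℕ ↪o ℕ := OrderEmbedding.ofStrictMono
    (fun k ↦ k + {i | s i ≤ k}.toFinset.sup t) fun k l hkl ↦ by
      refine add_lt_add_of_lt_of_le hkl (Finset.sup_mono fun i hi ↦ ?_)
      simp only [Set.mem_toFinset, Set.mem_ofPred_eq] at hi ⊢
      exact hi.trans hkl.le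
  have stretch_apply (s t : ι → ℕ) (hst : ∀ i j, s i ≤ s j → t i ≤ t j) (j : ι) :
      stretch s t (s j) = s j + t j := by
    refine congrArg (s j + ·) (le_antisymm (Finset.sup_le fun i hi ↦ ?_) (Finset.le_sup ?_))
    · exact hst i j (by simpa using hi)
    · simp
  refine ⟨stretch u v, stretch v u, fun i ↦ ?_⟩
  rw [stretch_apply u v fun i j ↦ (huv i j).1, stretch_apply v u fun i j ↦ (huv i j).2, add_comm]

lemma OrderInvariant.rel_of_le_iff_le (hr : OrderInvariant r) {a' b' : Fin n ↪o ℕ}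
    (hle : ∀ i j, a i ≤ b j ↔ a' i ≤ b' j) (hge : ∀ i j, b i ≤ a j ↔ b' i ≤ a' j)
    (hab : r a b) : r a' b' := by
  obtain ⟨f, g, hfg⟩ := exists_orderEmbedding_apply_eq (u := Sum.elim a b) (v := Sum.elim a' b')
    (by rintro (i | i) (j | j) <;> simp [hle, hge])
  have ha : a.trans f = a'.trans g := by ext i; exact hfg (.inl i)
  have hb : b.trans f = b'.trans g := by ext i; exact hfg (.inr i)
  rwa [← hr g, ← ha, ← hb, hr f]

lemma OrderInvariant.isFreeCoord_of_rel (hr : OrderInvariant r) {i : Fin n}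
    (hne : ∀ j ≠ i, a j = b j) (hlt : a i < b i) (hab : r a b) : IsFreeCoord r i := by
  have rel_of_lt {c d : Fin n ↪o ℕ} (hcd : ∀ j ≠ i, c j = d j) (hi : c i < d i) : r c d := by
    refine hr.rel_of_le_iff_le (fun j k ↦ ?_) (fun j k ↦ ?_) hab
    · obtain rfl | hk := eq_or_ne k i
      · obtain rfl | hj := eq_or_ne j k
        · exact iff_of_true hlt.le hi.le
        · simp [hne j hj, hcd j hj]
      · simp [← hne k hk, ← hcd k hk]
    · obtain rfl | hk := eq_or_ne k i
      · obtain rfl | hj := eq_or_ne j k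
        · exact iff_of_false hlt.not_ge hi.not_ge
        · simp [← hne j hj, ← hcd j hj]
      · simp [hne k hk, hcd k hk]
  intro c d hcd
  obtain hi | hi | hi := lt_trichotomy (c i) (d i)
  · exact rel_of_lt hcd hi
  · have : c = d := by
      ext j
      obtain rfl | hj := eq_or_ne j i
      exacts [hi, hcd j hj]
    rw [this]
  · exact r.symm (rel_of_lt (fun j hj ↦ (hcd j hj).symm) hi)

lemma OrderInvariant.exists_not_isFreeCoord_eq (hr : OrderInvariant r) (hab : r a b) {i : Fin n}
    (hi : ¬ IsFreeCoord r i) : ∃ j, ¬ IsFreeCoord r j ∧ b j = a i := by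
  by_contra! hb
  let double : ℕ ↪o ℕ := OrderEmbedding.ofStrictMono (2 * ·) fun k l hkl ↦ by dsimp only; omega
  let shift : ℕ ↪o ℕ := OrderEmbedding.ofStrictMono (fun k ↦ 2 * k + if k = a i then 1 else 0)
    fun k l hkl ↦ by dsimp only; split_ifs <;> omega
  have double_apply (k : ℕ) : double k = 2 * k := rfl
  have shift_apply (k : ℕ) : shift k = 2 * k + if k = a i then 1 else 0 := rfl
  have shift_self : double (a i) < shift (a i) := by simp [double_apply, shift_apply]
  have shift_of_ne {k : ℕ} (hk : k ≠ a i) : double k = shift k := by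
    simp [double_apply, shift_apply, hk]
  have rel_b : r (b.trans double) (b.trans shift) :=
    rel_of_eq_on_not_isFreeCoord fun j hj ↦ shift_of_ne (hb j hj)
  have rel_a : r (a.trans double) (a.trans shift) :=
    r.trans ((hr double a b).2 hab) (r.trans rel_b (r.symm ((hr shift a b).2 hab)))
  exact hi (hr.isFreeCoord_of_rel (fun j hj ↦ shift_of_ne (a.injective.ne hj)) shift_self rel_a)

theorem OrderInvariant.rel_iff_eq_on_not_isFreeCoord (hr : OrderInvariant r) :
    r a b ↔ ∀ i, ¬ IsFreeCoord r i → a i = b i := by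
  refine ⟨fun hab ↦ ?_, rel_of_eq_on_not_isFreeCoord⟩
  let restrict (c : Fin n ↪o ℕ) : {i // ¬ IsFreeCoord r i} → ℕ := fun i ↦ c i
  have restrict_strictMono (c : Fin n ↪o ℕ) : StrictMono (restrict c) := fun _ _ h ↦ c.strictMono h
  have range_subset {c d : Fin n ↪o ℕ} (hcd : r c d) :
      Set.range (restrict c) ⊆ Set.range (restrict d) := by
    rintro _ ⟨⟨i, hi⟩, rfl⟩
    obtain ⟨j, hj, hji⟩ := hr.exists_not_isFreeCoord_eq hcd hi
    exact ⟨⟨j, hj⟩, hji⟩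
  have restrict_eq : restrict a = restrict b :=
    ((restrict_strictMono a).range_inj (restrict_strictMono b)).1
      ((range_subset hab).antisymm (range_subset (r.symm hab)))
  exact fun i hi ↦ congrFun restrict_eq ⟨i, hi⟩

end Canonicity

section Enumeration

variable {α : Type*} {n : ℕ}

/-- The `n`-subset enumerated in increasing order by `a`. -/
def rangeFinset [Preorder α] (a : Fin n ↪o α) : Finset α :=
  Finset.univ.map a.toEmbedding

lemma card_rangeFinset [Preorder α] (a : Fin n ↪o α) : (rangeFinset a).card = n := by
  simp [rangeFinset]

lemma coe_rangeFinset [Preorder α] (a : Fin n ↪o α) : (rangeFinset a : Set α) = Set.range a := by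
  simp [rangeFinset]

lemma exists_rangeFinset_eq [LinearOrder α] {s : Finset α} (hs : s.card = n) :
    ∃ a : Fin n ↪o α, rangeFinset a = s :=
  ⟨s.orderEmbOfFin hs, s.map_orderEmbOfFin_univ hs⟩

lemma nth_rangeFinset (a : Fin n ↪o ℕ) (i : Fin n) : nth (rangeFinset a) i = a i := by
  have ha : a = (rangeFinset a).orderEmbOfFin (card_rangeFinset a) :=
    Finset.orderEmbOfFin_unique' _ fun i ↦ by simp [rangeFinset]
  conv_rhs => rw [ha, Finset.orderEmbOfFin_apply]
  exact List.getD_eq_getElem _ _ _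

lemma exists_trans_eq_of_range_subset {β γ : Type*} [Preorder α] [PartialOrder β] [Preorder γ]
    {a : β ↪o α} {b : γ ↪o α} (hab : Set.range a ⊆ Set.range b) :
    ∃ p : β ↪o γ, p.trans b = a := by
  choose p hp using fun i ↦ hab (Set.mem_range_self i)
  have p_le_iff (i j : β) : p i ≤ p j ↔ i ≤ j := by
    rw [← b.le_iff_le, hp, hp, a.le_iff_le]
  exact ⟨OrderEmbedding.ofMapLEIff p p_le_iff, by ext i; exact hp i⟩

lemma exists_orderEmbedding_ne_only_at (i : Fin n) :
    ∃ p q : Fin n ↪o Fin (2 * n), (∀ j ≠ i, p j = q j) ∧ p i ≠ q i := by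
  -- Doubling leaves room to move the `i`-th value alone.
  let spread (t : Fin n → Fin 2) : Fin n ↪o Fin (2 * n) := OrderEmbedding.ofStrictMono
    (fun j ↦ ⟨2 * j + t j, by omega⟩) fun j k hjk ↦ Fin.mk_lt_mk.2 (by omega)
  have spread_apply (t : Fin n → Fin 2) (j : Fin n) : (spread t j : ℕ) = 2 * j + t j := rfl
  refine ⟨spread 0, spread (Pi.single i 1), fun j hj ↦ Fin.ext ?_, fun h ↦ ?_⟩
  · simp [spread_apply, hj]
  · simpa [spread_apply] using congrArg Fin.val h

lemma exists_common_extension [LinearOrder α] [Infinite α] (a b : Fin n ↪o α) :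
    ∃ (p q : Fin n ↪o Fin (2 * n)) (z : Fin (2 * n) ↪o α), p.trans z = a ∧ q.trans z = b := by
  obtain ⟨t, hst, ht⟩ := Infinite.exists_superset_card_eq (rangeFinset a ∪ rangeFinset b) (2 * n)
    ((Finset.card_union_le _ _).trans (by simp only [card_rangeFinset]; omega))
  obtain ⟨z, rfl⟩ := exists_rangeFinset_eq ht
  rw [← Finset.coe_subset, Finset.coe_union, coe_rangeFinset, coe_rangeFinset, coe_rangeFinset,
    Set.union_subset_iff] at hst
  obtain ⟨p, hp⟩ := exists_trans_eq_of_range_subset hst.1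
  obtain ⟨q, hq⟩ := exists_trans_eq_of_range_subset hst.2
  exact ⟨p, q, z, hp, hq⟩

lemma exists_trans_orderEmbeddingOfSet_eq {X : Set ℕ} [Infinite X] [DecidablePred (· ∈ X)]
    {s : Finset ℕ} (hsX : ↑s ⊆ X) (hs : s.card = n) :
    ∃ a : Fin n ↪o ℕ, rangeFinset (a.trans (Nat.orderEmbeddingOfSet X)) = s := by
  obtain ⟨b, rfl⟩ := exists_rangeFinset_eq hs
  have range_subset : Set.range b ⊆ Set.range (Nat.orderEmbeddingOfSet X) := by
    rwa [Nat.orderEmbeddingOfSet_range, ← coe_rangeFinset]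
  obtain ⟨a, rfl⟩ := exists_trans_eq_of_range_subset range_subset
  exact ⟨a, rfl⟩

end Enumeration

section Partitions

variable {n : ℕ} {P : Set (Set (Finset ℕ))} {Q : Set (Finset ℕ)}

/-- `≈_P` on the `n`-subsets of the range of `g`, each written as `a.trans g` for an increasing
`n`-tuple `a` of indices. -/
def IsPartitionOn.setoid (hP : IsPartitionOn (cube n) P) (g : ℕ ↪o ℕ) :
    Setoid (Fin n ↪o ℕ) where
  r a b := EquivP P (rangeFinset (a.trans g)) (rangeFinset (b.trans g))
  iseqv :=
    { refl := fun a ↦ by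
        have : rangeFinset (a.trans g) ∈ ⋃₀ P := hP.1 ▸ card_rangeFinset _
        obtain ⟨A, hA, ha⟩ := this
        exact ⟨A, hA, ha, ha⟩
      symm := fun ⟨A, hA, ha, hb⟩ ↦ ⟨A, hA, hb, ha⟩
      trans := fun ⟨A, hA, ha, hb⟩ ⟨B, hB, hb', hc⟩ ↦ by
        obtain hAB | rfl := hP.2 A hA B hB
        · exact absurd (Set.mem_inter hb hb') (hAB ▸ Set.notMem_empty _)
        · exact ⟨A, hA, ha, hc⟩ }

/-- The element of `[2n]^n` with increasing enumeration `p`. -/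
def positions (p : Fin n ↪o Fin (2 * n)) : Finset ℕ := rangeFinset (p.trans (Fin.valOrderEmb _))

lemma nth_positions (p : Fin n ↪o Fin (2 * n)) (i : Fin n) : nth (positions p) i = p i :=
  nth_rangeFinset _ i

lemma mem_idx_iff {s : Finset ℕ} : s ∈ idx n ↔ ∃ p : Fin n ↪o Fin (2 * n), positions p = s := by
  rw [idx, Finset.mem_powersetCard]
  constructor
  · rintro ⟨hs, hcard⟩
    obtain ⟨a, rfl⟩ := exists_rangeFinset_eq hcard
    have range_subset : Set.range a ⊆ Set.range (Fin.valOrderEmb (2 * n)) := by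
      rw [← coe_rangeFinset]
      exact fun k hk ↦ ⟨⟨k, Finset.mem_range.1 (hs hk)⟩, rfl⟩
    obtain ⟨p, rfl⟩ := exists_trans_eq_of_range_subset range_subset
    exact ⟨p, rfl⟩
  · rintro ⟨p, rfl⟩
    refine ⟨fun k hk ↦ ?_, card_rangeFinset _⟩
    obtain ⟨i, -, rfl⟩ := Finset.mem_map.1 hk
    exact Finset.mem_range.2 (p i).isLt

lemma image_nth_positions (p : Fin n ↪o Fin (2 * n)) (z : Fin (2 * n) ↪o ℕ) :
    (positions p).image (nth (rangeFinset z)) = rangeFinset (p.trans z) := by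
  calc (positions p).image (nth (rangeFinset z))
    _ = Finset.univ.image fun i ↦ nth (rangeFinset z) (p i) := by
      rw [positions, rangeFinset.eq_def (p.trans _), Finset.map_eq_image, Finset.image_image]
      rfl
    _ = Finset.univ.image (p.trans z) := Finset.image_congr fun i _ ↦ nth_rangeFinset z (p i)
    _ = rangeFinset (p.trans z) := (Finset.map_eq_image _ _).symm

lemma rangeFinset_mem_Qpq_iff {p q : Fin n ↪o Fin (2 * n)} {z : Fin (2 * n) ↪o ℕ} :
    rangeFinset z ∈ Qpq n P (positions p) (positions q) ↔
      EquivP P (rangeFinset (p.trans z)) (rangeFinset (q.trans z)) := by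
  simp [Qpq, card_rangeFinset, image_nth_positions]

lemma subset_Qpq_iff_mem (hQ : Q ∈ Atoms n P) {p q z : Finset ℕ} (hp : p ∈ idx n)
    (hq : q ∈ idx n) (hz : z ∈ Q) : Q ⊆ Qpq n P p q ↔ z ∈ Qpq n P p q := by
  refine ⟨fun h ↦ h hz, fun hzpq ↦ ?_⟩
  obtain ⟨-, S, hS, rfl⟩ := hQ
  have subset_S : ⋂ p ∈ idx n, ⋂ q ∈ idx n, S p q ⊆ S p q :=
    (Set.biInter_subset_of_mem hp).trans (Set.biInter_subset_of_mem hq)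
  obtain hSpq | hSpq := hS p hp q hq
  · exact hSpq ▸ subset_S
  · exact absurd hzpq (hSpq ▸ subset_S hz).2

variable {g : ℕ ↪o ℕ} (hP : IsPartitionOn (cube n) P) (hQ : Q ∈ Atoms n P)
  (hg : ∀ z : Fin (2 * n) ↪o ℕ, rangeFinset (z.trans g) ∈ Q)
include hP hQ hg

lemma subset_Qpq_iff_rel (p q : Fin n ↪o Fin (2 * n)) (z : Fin (2 * n) ↪o ℕ) :
    Q ⊆ Qpq n P (positions p) (positions q) ↔ hP.setoid g (p.trans z) (q.trans z) := by
  rw [subset_Qpq_iff_mem hQ (mem_idx_iff.2 ⟨p, rfl⟩) (mem_idx_iff.2 ⟨q, rfl⟩) (hg z),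
    rangeFinset_mem_Qpq_iff]
  rfl

lemma orderInvariant_setoid : OrderInvariant (hP.setoid g) := by
  intro f a b
  obtain ⟨p, q, z, rfl, rfl⟩ := exists_common_extension a b
  exact (subset_Qpq_iff_rel hP hQ hg p q (z.trans f)).symm.trans
    (subset_Qpq_iff_rel hP hQ hg p q z)

lemma coe_mem_IofQ_iff (i : Fin n) :
    (i : ℕ) ∈ IofQ n P Q ↔ ∀ p q : Fin n ↪o Fin (2 * n),
      hP.setoid g (p.trans (Fin.valOrderEmb _)) (q.trans (Fin.valOrderEmb _)) → p i = q i := by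
  have forall_idx {C : Finset ℕ → Prop} :
      (∀ s ∈ idx n, C s) ↔ ∀ p : Fin n ↪o Fin (2 * n), C (positions p) := by
    simp [mem_idx_iff]
  simp only [IofQ, Ipq, Set.mem_iInter, forall_idx, subset_Qpq_iff_rel hP hQ hg _ _
    (Fin.valOrderEmb _), Set.mem_ofPred_eq, i.isLt, true_and, nth_positions, Fin.val_inj]

lemma coe_mem_IofQ_iff_not_isFreeCoord (i : Fin n) :
    (i : ℕ) ∈ IofQ n P Q ↔ ¬ IsFreeCoord (hP.setoid g) i := by
  rw [coe_mem_IofQ_iff hP hQ hg]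
  constructor
  · intro hi hfree
    obtain ⟨p, q, hpq, hne⟩ := exists_orderEmbedding_ne_only_at i
    exact hne (hi p q (hfree fun j hj ↦ congrArg Fin.val (hpq j hj)))
  · intro hfree p q hpq
    have := (orderInvariant_setoid hP hQ hg).rel_iff_eq_on_not_isFreeCoord.1 hpq i hfree
    exact Fin.val_injective this

lemma lt_of_mem_IofQ {i : ℕ} (hi : i ∈ IofQ n P Q) : i < n := by
  let p : Fin n ↪o Fin (2 * n) := Fin.castLEOrderEmb (by omega)
  have hp : positions p ∈ idx n := mem_idx_iff.2 ⟨p, rfl⟩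
  have hQp : Q ⊆ Qpq n P (positions p) (positions p) :=
    (subset_Qpq_iff_rel hP hQ hg p p (Fin.valOrderEmb _)).2 ((hP.setoid g).refl _)
  simp only [IofQ, Set.mem_iInter] at hi
  exact (hi _ hp _ hp hQp).1

end Partitions

theorem stmt_3_general {n : ℕ} {P : Set (Set (Finset ℕ))} (hP : IsPartitionOn (cube n) P)
    {Q : Set (Finset ℕ)} (hQ : Q ∈ Atoms n P) {X : Set ℕ} (hX : X.Infinite)
    (hXQ : ∀ z : Finset ℕ, ↑z ⊆ X → z.card = 2 * n → z ∈ Q) :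
    ICanon n P (IofQ n P Q) X := by
  classical
  have : Infinite X := hX.to_subtype
  let g := Nat.orderEmbeddingOfSet X
  have hg (z : Fin (2 * n) ↪o ℕ) : rangeFinset (z.trans g) ∈ Q := by
    refine hXQ _ ?_ (card_rangeFinset _)
    rw [coe_rangeFinset, ← Nat.orderEmbeddingOfSet_range X]
    exact Set.range_comp_subset_range z g
  intro x y hx hxc hy hyc
  obtain ⟨a, rfl⟩ := exists_trans_orderEmbeddingOfSet_eq hx hxc
  obtain ⟨b, rfl⟩ := exists_trans_orderEmbeddingOfSet_eq hy hyc
  calc EquivP P _ _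
    _ ↔ hP.setoid g a b := Iff.rfl
    _ ↔ ∀ i, ¬ IsFreeCoord (hP.setoid g) i → a i = b i :=
      (orderInvariant_setoid hP hQ hg).rel_iff_eq_on_not_isFreeCoord
    _ ↔ ∀ i : Fin n, (i : ℕ) ∈ IofQ n P Q → g (a i) = g (b i) := by
      simp only [coe_mem_IofQ_iff_not_isFreeCoord hP hQ hg, g.injective.eq_iff]
    _ ↔ ∀ i ∈ IofQ n P Q, nth (rangeFinset (a.trans g)) i = nth (rangeFinset (b.trans g)) i := by
      have nth_eq (c : Fin n ↪o ℕ) (i : Fin n) : nth (rangeFinset (c.trans g)) i = g (c i) :=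
        nth_rangeFinset _ i
      simp only [← nth_eq]
      exact ⟨fun h i hi ↦ h ⟨i, lt_of_mem_IofQ hP hQ hg hi⟩ hi, fun h i ↦ h i⟩

/-- Main Lemma: let `n ≥ 2`, `m = n^{n·B·(B-1)}`, `Q ∈ P*`, `X` infinite with
`[X]^{2n} ⊆ Q`. For `x, y ∈ [X⁻]^n` with `min(d(x), d(y)) ≥ m`:
`x ≈_P y` iff `x_[i] = y_[i]` for all `i ∈ I(Q)`. -/
theorem stmt_3 (n : ℕ) (hn : 2 ≤ n) (m : ℕ)
    (hm : m = n ^ (n * Nat.choose (2 * n) n * (Nat.choose (2 * n) n - 1)))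
    (P : Set (Set (Finset ℕ))) (hP : IsPartitionOn (cube n) P)
    (Q : Set (Finset ℕ)) (hQ : Q ∈ Atoms n P)
    (X : Set ℕ) (hX : X.Infinite)
    (hXQ : ∀ z : Finset ℕ, ↑z ⊆ X → z.card = 2 * n → z ∈ Q)
    (e : ℕ) (he : e = sInf X)
    (x y : Finset ℕ) (hx : ↑x ⊆ X \ {e}) (hxc : x.card = n)
    (hy : ↑y ⊆ X \ {e}) (hyc : y.card = n)
    (hdx : (m : ℕ∞) ≤ sparsity X e x) (hdy : (m : ℕ∞) ≤ sparsity X e y) :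
    EquivP P x y ↔ ∀ i ∈ IofQ n P Q, nth x i = nth y i := by
  exact stmt_3_general hP hQ hX hXQ x y (hx.trans Set.sdiff_subset) hxc
    (hy.trans Set.sdiff_subset) hyc
end

section
/- Let n ≥ 1, let P be a partition of [ω]^n, let Q ∈ P*, and let X ⊆ ℕ be an infinite set with [X]^{2n} ⊆ Q. Then for all x, y ∈ [X]^n: x ↔_Q y if and only if x ≈_P y. -/
/-!
Choose `z ∈ [X]^{2n}` containing `x ∪ y` and let `p`, `q` be the sets of positions of `x`, `y`
in `z`, so that `x →_{pq} y`. As an atom, `Q` is either contained in `Q_{pq}` or disjoint from it,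
and `z ∈ Q`; hence `Q ⊆ Q_{pq}` is equivalent to `z ∈ Q_{pq}`, that is, to `x ≈_P y`.
-/

theorem nth_val_eq_orderEmbOfFin (z : Finset ℕ) (i : Fin z.card) :
    nth z i = z.orderEmbOfFin rfl i :=
  List.getD_eq_getElem _ _ (by simp only [Finset.length_sort, i.isLt])

theorem bijOn_nth (z : Finset ℕ) : Set.BijOn (nth z) (Finset.range z.card) z := by
  refine ⟨fun i hi => ?_, fun i hi j hj hij => ?_, fun a ha => ?_⟩
  · rw [nth_val_eq_orderEmbOfFin z ⟨i, Finset.mem_range.1 hi⟩]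
    exact z.orderEmbOfFin_mem rfl _
  · rw [nth_val_eq_orderEmbOfFin z ⟨i, Finset.mem_range.1 hi⟩,
      nth_val_eq_orderEmbOfFin z ⟨j, Finset.mem_range.1 hj⟩] at hij
    exact congrArg Fin.val ((z.orderEmbOfFin rfl).injective hij)
  · rw [← z.range_orderEmbOfFin rfl] at ha
    obtain ⟨i, rfl⟩ := ha
    exact ⟨i, Finset.mem_coe.2 (Finset.mem_range.2 i.isLt), nth_val_eq_orderEmbOfFin z i⟩

theorem exists_mem_powersetCard_image_nth_eq {x z : Finset ℕ} (hxz : x ⊆ z) :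
    ∃ p ∈ Finset.powersetCard x.card (Finset.range z.card), p.image (nth z) = x := by
  obtain ⟨p, hp, hinj, rfl⟩ := Finset.exists_subset_injOn_image_eq_of_surjOn _ x
    ((bijOn_nth z).surjOn.mono subset_rfl (Finset.coe_subset.2 hxz))
  exact ⟨p, Finset.mem_powersetCard.2 ⟨Finset.coe_subset.1 hp,
    (Finset.card_image_of_injOn hinj).symm⟩, rfl⟩

theorem exists_mem_idx_image_nth_eq {n : ℕ} {x z : Finset ℕ} (hz : z.card = 2 * n)
    (hxz : x ⊆ z) (hx : x.card = n) : ∃ p ∈ idx n, p.image (nth z) = x := by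
  simpa only [idx, hz, hx] using exists_mem_powersetCard_image_nth_eq hxz

theorem exists_superset_coe_subset_card_eq {α : Type*} {s : Finset α} {t : Set α} {k : ℕ}
    (hst : ↑s ⊆ t) (hsk : s.card ≤ k) (hkt : k ≤ t.encard) :
    ∃ r : Finset α, s ⊆ r ∧ ↑r ⊆ t ∧ r.card = k := by
  obtain ⟨r, hsr, hrt, hrk⟩ := Set.exists_superset_subset_encard_eq hst
    (by rw [Set.encard_coe_eq_coe_finsetCard]; exact_mod_cast hsk) hkt
  lift r to Finset α using Set.finite_of_encard_eq_coe hrk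
  rw [Set.encard_coe_eq_coe_finsetCard] at hrk
  exact ⟨r, by exact_mod_cast hsr, hrt, by exact_mod_cast hrk⟩

theorem exists_arrow {n : ℕ} {X : Set ℕ} (hX : ↑(2 * n) ≤ X.encard) {x y : Finset ℕ}
    (hx : ↑x ⊆ X) (hxc : x.card = n) (hy : ↑y ⊆ X) (hyc : y.card = n) :
    ∃ p ∈ idx n, ∃ q ∈ idx n, Arrow X n p q x y := by
  have hxy_sub : ((x ∪ y : Finset ℕ) : Set ℕ) ⊆ X := by
    rw [Finset.coe_union]
    exact Set.union_subset hx hy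
  have hxy_card : (x ∪ y).card ≤ 2 * n := by
    have := Finset.card_union_le x y
    omega
  obtain ⟨z, hxyz, hzX, hzc⟩ := exists_superset_coe_subset_card_eq hxy_sub hxy_card hX
  obtain ⟨hxz, hyz⟩ := Finset.union_subset_iff.1 hxyz
  obtain ⟨p, hp, hpx⟩ := exists_mem_idx_image_nth_eq hzc hxz hxc
  obtain ⟨q, hq, hqy⟩ := exists_mem_idx_image_nth_eq hzc hyz hyc
  exact ⟨p, hp, q, hq, z, hzX, hzc, hpx, hqy⟩

section Atoms

variable {n : ℕ} {P : Set (Set (Finset ℕ))} {Q : Set (Finset ℕ)} {X : Set ℕ}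
  {p q x y : Finset ℕ}

theorem subset_or_disjoint_Qpq_of_mem_Atoms (hQ : Q ∈ Atoms n P) (hp : p ∈ idx n)
    (hq : q ∈ idx n) : Q ⊆ Qpq n P p q ∨ Disjoint Q (Qpq n P p q) := by
  obtain ⟨-, S, hS, rfl⟩ := hQ
  have hsub : ⋂ p ∈ idx n, ⋂ q ∈ idx n, S p q ⊆ S p q :=
    (Set.biInter_subset_of_mem hp).trans (Set.biInter_subset_of_mem hq)
  rcases hS p hp q hq with h | h <;> rw [h] at hsub
  · exact .inl hsub
  · exact .inr (Set.disjoint_sdiff_left.mono_left hsub)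

theorem subset_Qpq_iff_mem_of_mem_Atoms (hQ : Q ∈ Atoms n P) (hp : p ∈ idx n) (hq : q ∈ idx n)
    {z : Finset ℕ} (hz : z ∈ Q) : Q ⊆ Qpq n P p q ↔ z ∈ Qpq n P p q :=
  ⟨fun h => h hz, fun hzpq => (subset_or_disjoint_Qpq_of_mem_Atoms hQ hp hq).resolve_right
    (Set.not_disjoint_iff.2 ⟨z, hz, hzpq⟩)⟩

theorem Arrow.subset_Qpq_iff_equivP (hxy : Arrow X n p q x y) (hQ : Q ∈ Atoms n P)
    (hp : p ∈ idx n) (hq : q ∈ idx n)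
    (hXQ : ∀ z : Finset ℕ, ↑z ⊆ X → z.card = 2 * n → z ∈ Q) :
    Q ⊆ Qpq n P p q ↔ EquivP P x y := by
  obtain ⟨z, hzX, hzc, rfl, rfl⟩ := hxy
  rw [subset_Qpq_iff_mem_of_mem_Atoms hQ hp hq (hXQ z hzX hzc)]
  exact and_iff_right hzc

end Atoms

theorem stmt_4_general (n : ℕ) (P : Set (Set (Finset ℕ))) (Q : Set (Finset ℕ))
    (hQ : Q ∈ Atoms n P) (X : Set ℕ) (hX : ↑(2 * n) ≤ X.encard)
    (hXQ : ∀ z : Finset ℕ, ↑z ⊆ X → z.card = 2 * n → z ∈ Q)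
    (x y : Finset ℕ) (hx : ↑x ⊆ X) (hxc : x.card = n) (hy : ↑y ⊆ X) (hyc : y.card = n) :
    RelQ n P Q X x y ↔ EquivP P x y := by
  constructor
  · rintro ⟨p, hp, q, hq, hQpq, hpq⟩
    exact (hpq.subset_Qpq_iff_equivP hQ hp hq hXQ).1 hQpq
  · intro hxy
    obtain ⟨p, hp, q, hq, hpq⟩ := exists_arrow hX hx hxc hy hyc
    exact ⟨p, hp, q, hq, (hpq.subset_Qpq_iff_equivP hQ hp hq hXQ).2 hxy, hpq⟩

/-- for `Q ∈ P*` and infinite `X` with `[X]^{2n} ⊆ Q`, the relations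
`↔_Q` and `≈_P` coincide on `[X]^n`. -/
theorem stmt_4 (n : ℕ) (hn : 1 ≤ n) (P : Set (Set (Finset ℕ)))
    (hP : IsPartitionOn (cube n) P) (Q : Set (Finset ℕ)) (hQ : Q ∈ Atoms n P)
    (X : Set ℕ) (hX : X.Infinite)
    (hXQ : ∀ z : Finset ℕ, ↑z ⊆ X → z.card = 2 * n → z ∈ Q)
    (x y : Finset ℕ) (hx : ↑x ⊆ X) (hxc : x.card = n) (hy : ↑y ⊆ X) (hyc : y.card = n) :
    RelQ n P Q X x y ↔ EquivP P x y :=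
  stmt_4_general n P Q hQ X (hX.encard_eq ▸ le_top) hXQ x y hx hxc hy hyc
end

section
/- Let n ≥ 1, let X ⊆ ℕ, let x, y ∈ [X]^n, let p, q ∈ [2n]^n with x →_{pq} y, and let i < n. Then i ∈ I_{pq} if and only if x_[i] = y_[i]. -/
/-!
Enumerating a finite set in increasing order commutes with strictly increasing maps. Here `z_[·]`
is strictly increasing on `{0, …, 2n-1}`, so `x_[i] = z_[p_[i]]` and `y_[i] = z_[q_[i]]`, and by
injectivity of `z_[·]` these agree exactly when `p_[i] = q_[i]`.
-/

lemma nth_eq_orderEmbOfFin {s : Finset ℕ} {m i : ℕ} (hs : s.card = m) (hi : i < m) :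
    nth s i = s.orderEmbOfFin hs ⟨i, hi⟩ := by
  rw [Finset.orderEmbOfFin_apply]
  exact List.getD_eq_getElem _ 0 _

lemma nth_mem {s : Finset ℕ} {i : ℕ} (hi : i < s.card) : nth s i ∈ s :=
  nth_eq_orderEmbOfFin rfl hi ▸ Finset.orderEmbOfFin_mem s rfl _

lemma nth_strictMonoOn (s : Finset ℕ) : StrictMonoOn (nth s) (Set.Iio s.card) := by
  intro i hi j hj hij
  rw [nth_eq_orderEmbOfFin rfl hi, nth_eq_orderEmbOfFin rfl hj]
  exact (s.orderEmbOfFin rfl).strictMono hij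

lemma nth_image_of_strictMonoOn {s : Finset ℕ} {f : ℕ → ℕ} {i : ℕ} (hf : StrictMonoOn f s)
    (hi : i < s.card) : nth (s.image f) i = f (nth s i) := by
  have hcard : (s.image f).card = s.card := Finset.card_image_of_injOn hf.injOn
  have hunique : (fun j : Fin s.card => f (nth s j)) = (s.image f).orderEmbOfFin hcard :=
    Finset.orderEmbOfFin_unique hcard
      (fun j => Finset.mem_image_of_mem f (nth_mem j.isLt))
      (fun j k hjk => hf (nth_mem j.isLt) (nth_mem k.isLt)
        (nth_strictMonoOn s j.isLt k.isLt hjk))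
  exact (nth_eq_orderEmbOfFin hcard hi).trans (congrFun hunique ⟨i, hi⟩).symm

lemma nth_image_eq_nth_image_iff {s t : Finset ℕ} {f : ℕ → ℕ} {D : Set ℕ} {i : ℕ}
    (hf : StrictMonoOn f D) (hs : ↑s ⊆ D) (ht : ↑t ⊆ D) (his : i < s.card) (hit : i < t.card) :
    nth (s.image f) i = nth (t.image f) i ↔ nth s i = nth t i := by
  rw [nth_image_of_strictMonoOn (hf.mono hs) his, nth_image_of_strictMonoOn (hf.mono ht) hit]
  exact hf.injOn.eq_iff (hs (nth_mem his)) (ht (nth_mem hit))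

lemma card_of_mem_idx {n : ℕ} {p : Finset ℕ} (hp : p ∈ idx n) : p.card = n :=
  (Finset.mem_powersetCard.mp hp).2

lemma coe_subset_Iio_of_mem_idx {n : ℕ} {p : Finset ℕ} (hp : p ∈ idx n) :
    (p : Set ℕ) ⊆ Set.Iio (2 * n) :=
  fun _ ha => Finset.mem_range.mp ((Finset.mem_powersetCard.mp hp).1 ha)

/-- if `x →_{pq} y` then for `i < n`, `i ∈ I_{pq}` iff `x_[i] = y_[i]`. -/
theorem stmt_5 (n : ℕ) (hn : 1 ≤ n) (X : Set ℕ)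
    (x y : Finset ℕ) (hx : ↑x ⊆ X) (hxc : x.card = n) (hy : ↑y ⊆ X) (hyc : y.card = n)
    (p q : Finset ℕ) (hp : p ∈ idx n) (hq : q ∈ idx n)
    (harr : Arrow X n p q x y) (i : ℕ) (hi : i < n) :
    i ∈ Ipq n p q ↔ nth x i = nth y i := by
  obtain ⟨z, -, hz, rfl, rfl⟩ := harr
  have hmono : StrictMonoOn (nth z) (Set.Iio (2 * n)) := hz ▸ nth_strictMonoOn z
  have hip : i < p.card := hi.trans_eq (card_of_mem_idx hp).symm
  have hiq : i < q.card := hi.trans_eq (card_of_mem_idx hq).symm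
  calc i ∈ Ipq n p q
    _ ↔ nth p i = nth q i := and_iff_right hi
    _ ↔ nth (p.image (nth z)) i = nth (q.image (nth z)) i :=
      (nth_image_eq_nth_image_iff hmono (coe_subset_Iio_of_mem_idx hp)
        (coe_subset_Iio_of_mem_idx hq) hip hiq).symm
end

section
/- Let X ⊆ ℕ be infinite with e = min X. Then for all finite sets x, y, z ⊆ X⁻: r(x, z) ≤ r(x, y) + r(y, z) (the function r satisfies the triangle inequality). -/
section Rho

variable (X : Set ℕ) (a b c : ℕ)

lemma rho_self : rho X a a = 0 := by
  simp [rho]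

lemma rho_triangle : rho X a c ≤ rho X a b + rho X b c := by
  have hsubset : Set.Ico (min a c) (max a c) ⊆
      Set.Ico (min a b) (max a b) ∪ Set.Ico (min b c) (max b c) := by
    intro n
    simp only [Set.mem_union, Set.mem_Ico]
    omega
  unfold rho
  calc (X ∩ Set.Ico (min a c) (max a c)).ncard
      ≤ (X ∩ Set.Ico (min a b) (max a b) ∪ X ∩ Set.Ico (min b c) (max b c)).ncard := by
        rw [← Set.inter_union_distrib_left]
        exact Set.ncard_le_ncard (Set.inter_subset_inter_right X hsubset)
          (((Set.finite_Ico _ _).union (Set.finite_Ico _ _)).inter_of_right X)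
    _ ≤ (X ∩ Set.Ico (min a b) (max a b)).ncard + (X ∩ Set.Ico (min b c) (max b c)).ncard :=
        Set.ncard_union_le _ _

end Rho

section Rfun

variable {X : Set ℕ} {e : ℕ} {x y : Finset ℕ}

lemma rfun_le_iff (hy : ∀ b ∈ y, e ≤ b) {k : ℕ} :
    rfun X e x y ≤ k ↔ ∀ b ∈ y, ∃ a ∈ x ∪ {e}, a ≤ b ∧ rho X a b ≤ k := by
  refine Finset.sup_le_iff.trans (forall₂_congr fun b hb => ⟨fun hle => ?_, ?_⟩)
  · have hne : {a | a ∈ x ∪ {e} ∧ a ≤ b}.Nonempty := ⟨e, by simp, hy b hb⟩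
    obtain ⟨a, ⟨ha, hab⟩, hmin⟩ := Nat.sInf_mem (hne.image fun a => rho X a b)
    exact ⟨a, ha, hab, hmin.trans_le hle⟩
  · rintro ⟨a, ha, hab, hle⟩
    exact le_trans (Nat.sInf_le ⟨a, ⟨ha, hab⟩, rfl⟩) hle

variable (X x) in
lemma exists_rho_le_rfun (hy : ∀ b ∈ y, e ≤ b) {b : ℕ} (hb : b ∈ y ∪ {e}) :
    ∃ a ∈ x ∪ {e}, a ≤ b ∧ rho X a b ≤ rfun X e x y := by
  rcases Finset.mem_union.1 hb with hby | hbe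
  · exact (rfun_le_iff hy).1 le_rfl b hby
  · rw [Finset.mem_singleton.1 hbe]
    exact ⟨e, by simp, le_rfl, by simp [rho_self]⟩

end Rfun

theorem stmt_6_general (X : Set ℕ) (e : ℕ) (x y z : Finset ℕ)
    (hy : ∀ b ∈ y, e ≤ b) (hz : ∀ b ∈ z, e ≤ b) :
    rfun X e x z ≤ rfun X e x y + rfun X e y z := by
  refine (rfun_le_iff hz).2 fun c hc => ?_
  obtain ⟨b, hb, hbc, hρbc⟩ := exists_rho_le_rfun X y hz (Finset.mem_union_left {e} hc)
  obtain ⟨a, ha, hab, hρab⟩ := exists_rho_le_rfun X x hy hb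
  exact ⟨a, ha, hab.trans hbc, (rho_triangle X a b c).trans (add_le_add hρab hρbc)⟩

/-- the function `r` satisfies the triangle inequality. -/
theorem stmt_6 (X : Set ℕ) (hX : X.Infinite) (e : ℕ) (he : e = sInf X)
    (x y z : Finset ℕ) (hx : ↑x ⊆ X \ {e}) (hy : ↑y ⊆ X \ {e}) (hz : ↑z ⊆ X \ {e}) :
    rfun X e x z ≤ rfun X e x y + rfun X e y z := by
  have e_le : ∀ b ∈ X, e ≤ b := fun _ hb => he.trans_le (Nat.sInf_le hb)
  exact stmt_6_general X e x y z (fun b hb => e_le b (hy hb).1) (fun b hb => e_le b (hz hb).1)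
end

section
/- Let n ≥ 2, let P be a partition of [ω]^n, let Q ∈ P*, and let X ⊆ ℕ be infinite with [X]^{2n} ⊆ Q. For every natural number l ≥ 1, every x ∈ [X⁻]^n with d(x) ≥ n^{2l}, and every sequence (p_0,q_0), (p_1,q_1), …, (p_{l−1},q_{l−1}) of pairs from [2n]^n × [2n]^n such that Q ⊆ ⋂_{i<l} Q_{p_i q_i}, there is a 2l-cascade x_0, x_1, …, x_l with x_0 = x and x_i →_{p_i q_i} x_{i+1} for all i < l. -/
/-! Number the elements of `X` increasingly, so that `ρ` becomes the distance of positions. If the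
positions of `x⁺` are at least `(n + 1) D` apart, then any pattern of `n` new elements can be
inserted among them by placing each new element `D` positions after its predecessor: a run of at
most `n` insertions ends `D` positions before the next element of `x`, and every insertion is
within `n D` of an element of `x⁺`. So one step `x →_{pq} y` exists, with `d(y) ≥ D` and
`r(x, y) ≤ n D`. As `n + 1 ≤ n²`, a set `x` with `d(x) ≥ n^{k+2}` can be treated with `D = n^k`, and
each step of the cascade lowers the exponent by two. -/

theorem exists_seq_of_forall_lt {α : Type*} {l : ℕ} {I : ℕ → α → Prop} {R : ℕ → α → α → Prop}
    {a : α} (ha : I 0 a) (step : ∀ i < l, ∀ b, I i b → ∃ c, I (i + 1) c ∧ R i b c) :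
    ∃ s : ℕ → α, s 0 = a ∧ (∀ i ≤ l, I i (s i)) ∧ ∀ i < l, R i (s i) (s (i + 1)) := by
  have total_step (i : ℕ) (b : α) : ∃ c, i < l → I i b → I (i + 1) c ∧ R i b c := by
    by_cases h : i < l ∧ I i b
    · exact (step i h.1 b h.2).imp fun _ hc _ _ ↦ hc
    · exact ⟨a, fun hi hb ↦ absurd ⟨hi, hb⟩ h⟩
  choose next hnext using total_step
  let s : ℕ → α := Nat.rec a next
  have hI : ∀ i ≤ l, I i (s i) := by
    intro i
    induction i with
    | zero => exact fun _ ↦ ha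
    | succ i ih => exact fun hi ↦ (hnext i (s i) hi (ih (Nat.le_of_succ_le hi))).1
  exact ⟨s, rfl, hI, fun i hi ↦ (hnext i (s i) hi (hI i hi.le)).2⟩

section Interleave

theorem count_add_count_not (p : ℕ → Prop) [DecidablePred p] (i : ℕ) :
    Nat.count p i + Nat.count (fun j ↦ ¬p j) i = i := by
  simp only [Nat.count_eq_card_filter_range, Finset.card_filter_add_card_filter_not,
    Finset.card_range]

theorem count_mem_of_subset_range {p : Finset ℕ} {k : ℕ} (hp : p ⊆ Finset.range k) :
    Nat.count (· ∈ p) k = p.card := by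
  rw [Nat.count_eq_card_filter_range, Finset.filter_mem_eq_inter, Finset.inter_eq_right.2 hp]

theorem count_mem_le_card (p : Finset ℕ) (i : ℕ) : Nat.count (· ∈ p) i ≤ p.card := by
  simpa using Nat.count_le_card p.finite_toSet i

theorem count_mem_lt_card {p : Finset ℕ} {i : ℕ} (hi : i ∈ p) :
    Nat.count (· ∈ p) i < p.card := by
  simpa using Nat.count_lt_card p.finite_toSet hi

/-- The positions, in increasing order, of a sequence consisting of the terms of `u` and of new
terms, each placed `D` after its predecessor. After the initial term `u 0`, the next term of `u` is
taken at stage `i` if `i ∈ p`, and a new one is inserted otherwise. -/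
def interleave (p : Finset ℕ) (u : ℕ → ℕ) (D : ℕ) : ℕ → ℕ
  | 0 => u 0
  | i + 1 => if i ∈ p then u (Nat.count (· ∈ p) i + 1) else interleave p u D i + D

variable {p : Finset ℕ} {u : ℕ → ℕ} {D : ℕ} {i : ℕ}

theorem interleave_succ_of_mem (hi : i ∈ p) :
    interleave p u D (i + 1) = u (Nat.count (· ∈ p) i + 1) :=
  if_pos hi

theorem interleave_succ_of_notMem (hi : i ∉ p) :
    interleave p u D (i + 1) = interleave p u D i + D :=
  if_neg hi

theorem le_interleave (p : Finset ℕ) (u : ℕ → ℕ) (D i : ℕ) :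
    u (Nat.count (· ∈ p) i) ≤ interleave p u D i := by
  induction i with
  | zero => simp [interleave]
  | succ i ih =>
    by_cases hi : i ∈ p
    · simp [interleave_succ_of_mem, Nat.count_succ, hi]
    · simpa [interleave_succ_of_notMem, Nat.count_succ, hi] using ih.trans (Nat.le_add_right _ _)

theorem interleave_le (p : Finset ℕ) (u : ℕ → ℕ) (D i : ℕ) :
    interleave p u D i ≤ u (Nat.count (· ∈ p) i) + Nat.count (· ∉ p) i * D := by
  induction i with
  | zero => simp [interleave]
  | succ i ih =>
    by_cases hi : i ∈ p
    · simp [interleave_succ_of_mem, Nat.count_succ, hi]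
    · simp only [interleave_succ_of_notMem hi, Nat.count_succ, hi, if_false, not_false_eq_true,
        if_true, add_zero]
      linarith

theorem interleave_le_add_mul {m : ℕ} (hp : p ⊆ Finset.range (p.card + m))
    (hi : i ≤ p.card + m) :
    interleave p u D i ≤ u (Nat.count (· ∈ p) i) + m * D := by
  have count_notMem_le : Nat.count (· ∉ p) i ≤ m := by
    have := count_add_count_not (· ∈ p) (p.card + m)
    have := Nat.count_monotone (· ∉ p) hi
    have := count_mem_of_subset_range hp
    omega
  exact (interleave_le p u D i).trans (by gcongr)

theorem interleave_add_le_succ {m : ℕ} (hp : p ⊆ Finset.range (p.card + m))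
    (u_gap : ∀ j < p.card, u j + (m + 1) * D ≤ u (j + 1)) (i : ℕ) :
    interleave p u D i + D ≤ interleave p u D (i + 1) := by
  by_cases hi : i ∈ p
  · calc interleave p u D i + D
      _ ≤ u (Nat.count (· ∈ p) i) + m * D + D := by
        gcongr
        exact interleave_le_add_mul hp (Finset.mem_range.1 (hp hi)).le
      _ = u (Nat.count (· ∈ p) i) + (m + 1) * D := by ring
      _ ≤ u (Nat.count (· ∈ p) i + 1) := u_gap _ (count_mem_lt_card hi)
      _ = interleave p u D (i + 1) := (interleave_succ_of_mem hi).symm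
  · exact (interleave_succ_of_notMem hi).ge

end Interleave

section Arrow

theorem nth_image_range {f : ℕ → ℕ} (hf : StrictMono f) {m i : ℕ} (hi : i < m) :
    nth ((Finset.range m).image f) i = f i := by
  have hsort : ((List.range m).map f).toFinset.sort (· ≤ ·) = (List.range m).map f :=
    (List.toFinset_sort (· ≤ ·) (List.nodup_range.map hf.injective)).2
      (List.pairwise_lt_range.map f fun _ _ hab ↦ (hf hab).le)
  have himage : (Finset.range m).image f = ((List.range m).map f).toFinset := by ext; simp
  simp [nth, himage, hsort, hi]

theorem arrow_image {X : Set ℕ} {n : ℕ} {f : ℕ → ℕ} (hf : StrictMono f) (hfX : ∀ i, f i ∈ X)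
    {p q : Finset ℕ} (hp : p ∈ idx n) (hq : q ∈ idx n) :
    Arrow X n p q (p.image f) (q.image f) := by
  have image_nth {s : Finset ℕ} (hs : s ∈ idx n) :
      s.image (nth ((Finset.range (2 * n)).image f)) = s.image f :=
    Finset.image_congr fun i hi ↦
      nth_image_range hf (Finset.mem_range.1 ((Finset.mem_powersetCard.1 hs).1 hi))
  refine ⟨(Finset.range (2 * n)).image f, ?_, ?_, image_nth hp, image_nth hq⟩
  · simp [Set.subset_def, hfX]
  · rw [Finset.card_image_of_injective _ hf.injective, Finset.card_range]

end Arrow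

section Distance

variable {X : Set ℕ}

theorem rho_comm (X : Set ℕ) (a b : ℕ) : rho X a b = rho X b a := by
  rw [rho, rho, min_comm, max_comm]

theorem count_add_rho [DecidablePred (· ∈ X)] {a b : ℕ} (hab : a ≤ b) :
    Nat.count (· ∈ X) a + rho X a b = Nat.count (· ∈ X) b := by
  have hrho : rho X a b = ((Finset.Ico a b).filter (· ∈ X)).card := by
    rw [rho, min_eq_left hab, max_eq_right hab, ← Set.ncard_coe_finset, Finset.coe_filter,
      Set.inter_comm]
    congr 1
    ext; simp
  rw [hrho, Nat.count_eq_card_filter_range, Nat.count_eq_card_filter_range,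
    Finset.range_eq_Ico, Finset.range_eq_Ico, ← Finset.Ico_union_Ico_eq_Ico a.zero_le hab,
    Finset.filter_union, Finset.card_union_of_disjoint]
  exact Finset.disjoint_filter_filter (Finset.Ico_disjoint_Ico_consecutive 0 a b)

theorem rho_nth_nth (hX : X.Infinite) {i j : ℕ} (hij : i ≤ j) :
    rho X (Nat.nth (· ∈ X) i) (Nat.nth (· ∈ X) j) = j - i := by
  classical
  have h := count_add_rho (X := X) (Nat.nth_monotone (p := (· ∈ X)) hX hij)
  simp only [Nat.count_nth_of_infinite (p := (· ∈ X)) hX] at h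
  exact Nat.eq_sub_of_add_eq' h

theorem le_sparsity_iff {e N : ℕ} {x : Finset ℕ} :
    (N : ℕ∞) ≤ sparsity X e x ↔
      ∀ a ∈ x ∪ {e}, ∀ b ∈ x ∪ {e}, a < b → N ≤ rho X a b := by
  simp only [sparsity, le_iInf_iff, Nat.cast_le]
  refine ⟨fun h a ha b hb hab ↦ h a ha b hb hab.ne, fun h a ha b hb hab ↦ ?_⟩
  rcases hab.lt_or_gt with hab | hba
  · exact h a ha b hb hab
  · exact rho_comm X a b ▸ h b hb a ha hba

theorem rfun_le {e R : ℕ} {x y : Finset ℕ}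
    (h : ∀ b ∈ y, ∃ a ∈ x ∪ {e}, a ≤ b ∧ rho X a b ≤ R) : rfun X e x y ≤ R := by
  refine Finset.sup_le fun b hb ↦ ?_
  obtain ⟨a, ha, hab, hR⟩ := h b hb
  refine le_trans (Nat.sInf_le ?_) hR
  exact ⟨a, ⟨ha, hab⟩, rfl⟩

theorem nth_zero_eq_sInf (X : Set ℕ) : Nat.nth (· ∈ X) 0 = sInf X :=
  Nat.nth_zero

theorem le_sparsity_image_nth (hX : X.Infinite) {w : ℕ → ℕ} {D : ℕ} (w_zero : w 0 = 0)
    (w_gap : ∀ i, w i + D ≤ w (i + 1)) (q : Finset ℕ) :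
    (D : ℕ∞) ≤ sparsity X (sInf X) (q.image fun i ↦ Nat.nth (· ∈ X) (w (i + 1))) := by
  have w_mono : Monotone w := monotone_nat_of_le_succ fun i ↦ by have := w_gap i; omega
  have exists_eq : ∀ a ∈ (q.image fun i ↦ Nat.nth (· ∈ X) (w (i + 1))) ∪ {sInf X},
      ∃ i, Nat.nth (· ∈ X) (w i) = a := by
    intro a ha
    rcases Finset.mem_union.1 ha with ha | ha
    · obtain ⟨i, -, rfl⟩ := Finset.mem_image.1 ha
      exact ⟨i + 1, rfl⟩
    · exact ⟨0, by rw [w_zero, nth_zero_eq_sInf, Finset.mem_singleton.1 ha]⟩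
  refine le_sparsity_iff.2 fun a ha b hb hab ↦ ?_
  obtain ⟨i, rfl⟩ := exists_eq a ha
  obtain ⟨j, rfl⟩ := exists_eq b hb
  have hij : i < j := w_mono.reflect_lt ((Nat.nth_lt_nth hX).1 hab)
  have hD : w i + D ≤ w j := (w_gap i).trans (w_mono hij)
  rw [rho_nth_nth hX (by omega)]
  omega

theorem exists_positions_of_le_sparsity (hX : X.Infinite) {N : ℕ} {x : Finset ℕ}
    (hx : ↑x ⊆ X \ {sInf X}) (hN : (N : ℕ∞) ≤ sparsity X (sInf X) x) :
    ∃ u : ℕ → ℕ, u 0 = 0 ∧ (∀ j < x.card, u j + N ≤ u (j + 1)) ∧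
      ∀ j ≤ x.card, Nat.nth (· ∈ X) (u j) ∈ x ∪ {sInf X} := by
  classical
  set s := x ∪ {sInf X} with hs
  have s_subset : ∀ a ∈ s, a ∈ X := by
    simp only [hs, Finset.mem_union, Finset.mem_singleton]
    rintro a (ha | rfl)
    exacts [(hx ha).1, Nat.sInf_mem hX.nonempty]
  have sInf_mem_s : sInf X ∈ s := Finset.mem_union_right _ (Finset.mem_singleton_self _)
  have s_card : s.card = x.card + 1 :=
    Finset.card_union_of_disjoint (Finset.disjoint_singleton_right.2 fun h ↦ (hx h).2 rfl)
  have s_finite : (Set.ofPred (· ∈ s)).Finite := s.finite_toSet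
  have s_card' : s_finite.toFinset.card = x.card + 1 := by
    rw [← s_card]; congr 1; ext; simp
  have nth_s_mem {j : ℕ} (hj : j ≤ x.card) : Nat.nth (· ∈ s) j ∈ s :=
    Nat.nth_mem_of_lt_card s_finite (by omega)
  have nth_s_zero : Nat.nth (· ∈ s) 0 = sInf X :=
    le_antisymm (Nat.nth_zero.trans_le (Nat.sInf_le sInf_mem_s))
      (Nat.sInf_le (s_subset _ (nth_s_mem x.card.zero_le)))
  refine ⟨fun j ↦ Nat.count (· ∈ X) (Nat.nth (· ∈ s) j), ?_, fun j hj ↦ ?_, fun j hj ↦ ?_⟩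
  · beta_reduce
    rw [nth_s_zero, ← nth_zero_eq_sInf, Nat.count_nth_zero]
  · have nth_lt := Nat.nth_lt_nth_of_lt_card s_finite j.lt_succ_self (by omega)
    beta_reduce
    rw [← count_add_rho nth_lt.le]
    gcongr
    exact le_sparsity_iff.1 hN _ (nth_s_mem hj.le) _ (nth_s_mem hj) nth_lt
  · rw [Nat.nth_count (s_subset _ (nth_s_mem hj))]
    exact nth_s_mem hj

end Distance

theorem exists_arrow_of_le_sparsity {X : Set ℕ} (hX : X.Infinite) {D : ℕ} (hD : 0 < D)
    {x : Finset ℕ} (hx : ↑x ⊆ X \ {sInf X})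
    (hd : (((x.card + 1) * D : ℕ) : ℕ∞) ≤ sparsity X (sInf X) x)
    {p q : Finset ℕ} (hp : p ∈ idx x.card) (hq : q ∈ idx x.card) :
    ∃ y : Finset ℕ, ↑y ⊆ X \ {sInf X} ∧ y.card = x.card ∧ (D : ℕ∞) ≤ sparsity X (sInf X) y ∧
      rfun X (sInf X) x y ≤ x.card * D ∧ Arrow X x.card p q x y := by
  obtain ⟨u, u_zero, u_gap, u_mem⟩ := exists_positions_of_le_sparsity hX hx hd
  obtain ⟨p_subset, p_card⟩ := Finset.mem_powersetCard.1 hp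
  obtain ⟨q_subset, q_card⟩ := Finset.mem_powersetCard.1 hq
  have hp' : p ⊆ Finset.range (p.card + x.card) := by rwa [p_card, ← two_mul]
  set w := interleave p u D
  have w_zero : w 0 = 0 := u_zero
  have w_gap : ∀ i, w i + D ≤ w (i + 1) := interleave_add_le_succ hp' (by rwa [p_card])
  have w_strictMono : StrictMono w :=
    strictMono_nat_of_lt_succ fun i ↦ (Nat.lt_add_of_pos_right hD).trans_le (w_gap i)
  set f : ℕ → ℕ := fun i ↦ Nat.nth (· ∈ X) (w (i + 1))
  have f_strictMono : StrictMono f := fun i j hij ↦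
    Nat.nth_strictMono hX (w_strictMono (Nat.succ_lt_succ hij))
  have f_mem (i : ℕ) : f i ∈ X := Nat.nth_mem_of_infinite hX _
  have f_ne (i : ℕ) : f i ≠ sInf X := by
    rw [← nth_zero_eq_sInf, ← w_zero]
    exact (Nat.nth_strictMono hX (w_strictMono i.succ_pos)).ne'
  have image_p : p.image f = x := by
    refine Finset.eq_of_subset_of_card_le (Finset.image_subset_iff.2 fun i hi ↦ ?_) ?_
    · have h : f i ∈ x ∪ {sInf X} := by
        simp only [f, w, interleave_succ_of_mem hi]
        exact u_mem _ (p_card ▸ count_mem_lt_card hi)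
      simpa [f_ne] using h
    · rw [Finset.card_image_of_injective _ f_strictMono.injective, p_card]
  refine ⟨q.image f, ?_, ?_, le_sparsity_image_nth hX w_zero w_gap q, rfun_le ?_, ?_⟩
  · simp [Set.subset_def, f_mem, f_ne]
  · rw [Finset.card_image_of_injective _ f_strictMono.injective, q_card]
  · refine Finset.forall_mem_image.2 fun i hi ↦ ?_
    have hi' : i + 1 ≤ x.card + x.card := two_mul x.card ▸ Finset.mem_range.1 (q_subset hi)
    have u_le := le_interleave p u D (i + 1)
    refine ⟨_, u_mem _ ((count_mem_le_card p _).trans_eq p_card), Nat.nth_monotone hX u_le, ?_⟩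
    rw [rho_nth_nth hX u_le, Nat.sub_le_iff_le_add']
    exact interleave_le_add_mul hp' (p_card ▸ hi')
  · simpa only [image_p] using arrow_image f_strictMono f_mem hp hq

theorem exists_arrow_of_pow_le_sparsity {X : Set ℕ} (hX : X.Infinite) {n k : ℕ} (hn : 2 ≤ n)
    {x : Finset ℕ} (hx : ↑x ⊆ X \ {sInf X}) (hxc : x.card = n)
    (hd : ((n ^ (k + 2) : ℕ) : ℕ∞) ≤ sparsity X (sInf X) x)
    {p q : Finset ℕ} (hp : p ∈ idx n) (hq : q ∈ idx n) :
    ∃ y : Finset ℕ, ↑y ⊆ X \ {sInf X} ∧ y.card = n ∧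
      ((n ^ k : ℕ) : ℕ∞) ≤ sparsity X (sInf X) y ∧
      rfun X (sInf X) x y ≤ n ^ (k + 1) ∧ Arrow X n p q x y := by
  subst hxc
  have hpow : (x.card + 1) * x.card ^ k ≤ x.card ^ (k + 2) := by
    rw [pow_add, mul_comm]
    gcongr
    nlinarith
  rw [pow_succ']
  exact exists_arrow_of_le_sparsity hX (pow_pos (by omega) k) hx
    ((Nat.cast_le.2 hpow).trans hd) hp hq

theorem exists_seq_arrow_of_pow_le_sparsity {X : Set ℕ} (hX : X.Infinite) {n l : ℕ} (hn : 2 ≤ n)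
    {x : Finset ℕ} (hx : ↑x ⊆ X \ {sInf X}) (hxc : x.card = n)
    (hd : ((n ^ (2 * l) : ℕ) : ℕ∞) ≤ sparsity X (sInf X) x)
    {pq : ℕ → Finset ℕ × Finset ℕ} (hpq : ∀ i < l, (pq i).1 ∈ idx n ∧ (pq i).2 ∈ idx n) :
    ∃ xs : ℕ → Finset ℕ, xs 0 = x ∧
      (∀ i ≤ l, (↑(xs i) ⊆ X \ {sInf X} ∧ (xs i).card = n) ∧
        ((n ^ (2 * l - 2 * i) : ℕ) : ℕ∞) ≤ sparsity X (sInf X) (xs i)) ∧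
      ∀ i < l, rfun X (sInf X) (xs i) (xs (i + 1)) ≤ n ^ (2 * l - 2 * i - 1) ∧
        Arrow X n (pq i).1 (pq i).2 (xs i) (xs (i + 1)) := by
  refine exists_seq_of_forall_lt
    (I := fun i y ↦ (↑y ⊆ X \ {sInf X} ∧ y.card = n) ∧
      ((n ^ (2 * l - 2 * i) : ℕ) : ℕ∞) ≤ sparsity X (sInf X) y)
    (R := fun i y z ↦ rfun X (sInf X) y z ≤ n ^ (2 * l - 2 * i - 1) ∧
      Arrow X n (pq i).1 (pq i).2 y z)
    ⟨⟨hx, hxc⟩, hd⟩ ?_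
  rintro i hi y ⟨⟨hy, hyc⟩, hyd⟩
  have hexp : 2 * l - 2 * i = 2 * l - 2 * (i + 1) + 2 := by omega
  rw [hexp] at hyd ⊢
  obtain ⟨z, hz, hzc, hzd, hr, harrow⟩ :=
    exists_arrow_of_pow_le_sparsity hX hn hy hyc hyd (hpq i hi).1 (hpq i hi).2
  exact ⟨z, ⟨⟨hz, hzc⟩, hzd⟩, hr, harrow⟩

theorem stmt_8_general (n : ℕ) (hn : 2 ≤ n) (P : Set (Set (Finset ℕ))) (Q : Set (Finset ℕ))
    (X : Set ℕ) (hX : X.Infinite) (e : ℕ) (he : e = sInf X) (l : ℕ)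
    (x : Finset ℕ) (hx : ↑x ⊆ X \ {e}) (hxc : x.card = n)
    (hd : ((n ^ (2 * l) : ℕ) : ℕ∞) ≤ sparsity X e x)
    (pq : ℕ → Finset ℕ × Finset ℕ)
    (hpq : ∀ i < l, (pq i).1 ∈ idx n ∧ (pq i).2 ∈ idx n ∧ Q ⊆ Qpq n P (pq i).1 (pq i).2) :
    ∃ xs : ℕ → Finset ℕ, xs 0 = x ∧ IsCascade n P Q X e (2 * l) l xs ∧
      ∀ i < l, Arrow X n (pq i).1 (pq i).2 (xs i) (xs (i + 1)) := by
  subst he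
  obtain ⟨xs, xs_zero, hxs, hstep⟩ := exists_seq_arrow_of_pow_le_sparsity hX hn hx hxc hd
    fun i hi ↦ ⟨(hpq i hi).1, (hpq i hi).2.1⟩
  have hrel (i : ℕ) (hi : i < l) : RelQ n P Q X (xs i) (xs (i + 1)) :=
    ⟨_, (hpq i hi).1, _, (hpq i hi).2.1, (hpq i hi).2.2, (hstep i hi).2⟩
  exact ⟨xs, xs_zero,
    ⟨fun i hi ↦ (hxs i hi).1, fun i hi ↦ ⟨(hxs i hi.le).2, (hstep i hi).1, hrel i hi⟩⟩,
    fun i hi ↦ (hstep i hi).2⟩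

/-- given `l ≥ 1`, `x ∈ [X⁻]^n` with `d(x) ≥ n^{2l}`, and pairs
`(p_i, q_i) ∈ [2n]^n × [2n]^n` (`i < l`) with `Q ⊆ Q_{p_i q_i}`, there is a `2l`-cascade
`x_0, …, x_l` with `x_0 = x` and `x_i →_{p_i q_i} x_{i+1}` for all `i < l`. -/
theorem stmt_8 (n : ℕ) (hn : 2 ≤ n) (P : Set (Set (Finset ℕ)))
    (hP : IsPartitionOn (cube n) P) (Q : Set (Finset ℕ)) (hQ : Q ∈ Atoms n P)
    (X : Set ℕ) (hX : X.Infinite)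
    (hXQ : ∀ z : Finset ℕ, ↑z ⊆ X → z.card = 2 * n → z ∈ Q)
    (e : ℕ) (he : e = sInf X)
    (l : ℕ) (hl : 1 ≤ l)
    (x : Finset ℕ) (hx : ↑x ⊆ X \ {e}) (hxc : x.card = n)
    (hd : ((n ^ (2 * l) : ℕ) : ℕ∞) ≤ sparsity X e x)
    (pq : ℕ → Finset ℕ × Finset ℕ)
    (hpq : ∀ i < l, (pq i).1 ∈ idx n ∧ (pq i).2 ∈ idx n ∧ Q ⊆ Qpq n P (pq i).1 (pq i).2) :
    ∃ xs : ℕ → Finset ℕ, xs 0 = x ∧ IsCascade n P Q X e (2 * l) l xs ∧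
      ∀ i < l, Arrow X n (pq i).1 (pq i).2 (xs i) (xs (i + 1)) := by
  exact stmt_8_general n hn P Q X hX e he l x hx hxc hd pq hpq
end
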